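/- Let a > 0 with a ≠ 1 and let s > a/4. Let ψ = 1 - χ, where χ ∈ C_c^∞(ℝ) is even with χ = 0 outside (-2,2), χ = 1 on [-1,1], and 0 ≤ χ ≤ 1. Then there exists a constant C > 0 such that for every measurable function t : (0,∞) → (-1,1), every sign ε ∈ {+1,-1}, and every f ∈ C_c^∞((0,∞)): ∫_0^∞ |ψ(r) ∫_0^∞ e^{i(ε rρ + t(r) ρ^a)} ρ^{-s} ψ(ρ) f(ρ) dρ|² dr ≤ C² ∫_0^∞ |f(ρ)|² dρ, where C is independent of t, ε, and f. -/

import Mathlib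

open MeasureTheory Real

noncomputable section

/-!
Write the operator as `f ↦ ⟪e r, f⟫`, where `e r` is the wave with frequencies `(ε r, t r)`, and
cut it into the dyadic pieces `ρ ∼ 2 ^ j`. A generalised Bessel inequality (Schur's test for the
Gram kernel) bounds the square of the `L²` norm of a piece by `sup_r ∫ |⟪e r, e r'⟫| dr'`. This
Gram kernel is an oscillatory integral with phase `A ρ + B ρ ^ a`, where `A = ε (r - r')` and
`|B| ≤ 2`. It is `O(A ^ (-2))` by integration by parts when `|A| ≫ |B|`, and
`O(|B| ^ (-1/2)) = O(|A| ^ (-1/2))` by van der Corput's second derivative test otherwise; both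
bounds are uniform in `B`, which is what makes `t` arbitrary. After rescaling, the second regime
is `|A| ≲ 2 ^ (j a)`, so the `j`-th piece has norm `O(2 ^ (j a / 4))`. The factor `2 ^ (-j s)` from
`ρ ^ (-s)` makes the sum over `j` converge.
-/

open scoped ENNReal InnerProductSpace Topology

section GeneralizedBessel

variable {X : Type*} [MeasurableSpace X] {μ : Measure X} {M : ℝ≥0∞}

lemma lintegral_enorm_sq {E : Type*} [NormedAddCommGroup E] (f : X → E) :
    ∫⁻ x, ‖f x‖ₑ ^ 2 ∂μ = eLpNorm f 2 μ ^ 2 := by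
  simpa using (eLpNorm_nnreal_pow_eq_lintegral (f := f) (μ := μ) (p := 2) two_ne_zero).symm

lemma integral_norm_sq_le_of_eLpNorm_le {Y E F : Type*} [MeasurableSpace Y]
    [NormedAddCommGroup E] [NormedAddCommGroup F] {ν : Measure Y} {g : X → E} {f : Y → F} {C : ℝ}
    (hC : 0 ≤ C) (hf : MemLp f 2 ν)
    (h : eLpNorm g 2 μ ≤ ENNReal.ofReal C * eLpNorm f 2 ν) :
    ∫ x, ‖g x‖ ^ 2 ∂μ ≤ C ^ 2 * ∫ y, ‖f y‖ ^ 2 ∂ν := by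
  have hf2 : eLpNorm f 2 ν ^ 2 = ENNReal.ofReal (∫ y, ‖f y‖ ^ 2 ∂ν) := by
    rw [← lintegral_enorm_sq, ofReal_integral_eq_lintegral_ofReal
      (hf.integrable_norm_pow two_ne_zero) (.of_forall fun y => by positivity)]
    simp only [ENNReal.ofReal_pow (norm_nonneg _), ofReal_norm]
  refine (ENNReal.ofReal_le_ofReal_iff (by positivity)).1 ?_
  calc ENNReal.ofReal (∫ x, ‖g x‖ ^ 2 ∂μ)
      = ‖∫ x, ‖g x‖ ^ 2 ∂μ‖ₑ := (Real.enorm_of_nonneg (by positivity)).symm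
    _ ≤ ∫⁻ x, ‖g x‖ₑ ^ 2 ∂μ := by
        refine (enorm_integral_le_lintegral_enorm _).trans_eq (lintegral_congr fun x => ?_)
        rw [enorm_pow, enorm_norm]
    _ ≤ (ENNReal.ofReal C * eLpNorm f 2 ν) ^ 2 := by
        rw [lintegral_enorm_sq]
        gcongr
    _ = ENNReal.ofReal (C ^ 2 * ∫ y, ‖f y‖ ^ 2 ∂ν) := by
        rw [mul_pow, hf2, ENNReal.ofReal_mul (by positivity), ENNReal.ofReal_pow hC]

lemma two_mul_mul_le_sq_add_sq (a b : ℝ≥0∞) : 2 * (a * b) ≤ a ^ 2 + b ^ 2 := by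
  wlog hab : a ≤ b generalizing a b
  · rw [mul_comm a, add_comm]
    exact this b a (le_of_not_ge hab)
  obtain ⟨c, rfl⟩ := exists_add_of_le hab
  calc 2 * (a * (a + c)) ≤ 2 * (a * (a + c)) + c ^ 2 := le_self_add
    _ = a ^ 2 + (a + c) ^ 2 := by ring

lemma lintegral_lintegral_mul_le_of_symm [SFinite μ] {k : X → X → ℝ≥0∞}
    (hk : Measurable (Function.uncurry k)) (hsymm : ∀ x y, k x y = k y x)
    (hM : ∀ x, ∫⁻ y, k x y ∂μ ≤ M) {u : X → ℝ≥0∞} (hu : Measurable u) :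
    ∫⁻ x, ∫⁻ y, k x y * (u x * u y) ∂μ ∂μ ≤ M * ∫⁻ x, u x ^ 2 ∂μ := by
  have hrow : ∫⁻ x, ∫⁻ y, k x y * u x ^ 2 ∂μ ∂μ ≤ M * ∫⁻ x, u x ^ 2 ∂μ := by
    rw [← lintegral_const_mul M (hu.pow_const 2)]
    refine lintegral_mono fun x => ?_
    rw [lintegral_mul_const _ (by fun_prop)]
    gcongr
    exact hM x
  have hcol : ∫⁻ x, ∫⁻ y, k x y * u y ^ 2 ∂μ ∂μ = ∫⁻ x, ∫⁻ y, k x y * u x ^ 2 ∂μ ∂μ := by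
    rw [lintegral_lintegral_swap (by fun_prop)]
    simp only [hsymm]
  refine (ENNReal.mul_le_mul_iff_right two_ne_zero ENNReal.ofNat_ne_top).1 ?_
  calc 2 * ∫⁻ x, ∫⁻ y, k x y * (u x * u y) ∂μ ∂μ
      = ∫⁻ x, ∫⁻ y, k x y * (2 * (u x * u y)) ∂μ ∂μ := by
        simp only [mul_left_comm _ (2 : ℝ≥0∞)]
        rw [← lintegral_const_mul _ (by fun_prop)]
        congr! 2 with x
        rw [lintegral_const_mul _ (by fun_prop)]
    _ ≤ ∫⁻ x, ∫⁻ y, k x y * (u x ^ 2 + u y ^ 2) ∂μ ∂μ := by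
        gcongr
        exact two_mul_mul_le_sq_add_sq _ _
    _ = 2 * ∫⁻ x, ∫⁻ y, k x y * u x ^ 2 ∂μ ∂μ := by
        rw [two_mul]
        nth_rewrite 2 [← hcol]
        rw [← lintegral_add_left (by fun_prop)]
        congr! 2 with x
        simp only [mul_add]
        rw [lintegral_add_left (by fun_prop)]
    _ ≤ 2 * (M * ∫⁻ x, u x ^ 2 ∂μ) := by gcongr

variable {𝕜 H : Type*} [RCLike 𝕜] [NormedAddCommGroup H] [InnerProductSpace 𝕜 H]
  [CompleteSpace H] {e : X → H}

lemma enorm_integral_smul_sq_le [NormedSpace ℝ H] [SFinite μ] (he : StronglyMeasurable e)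
    (hM : ∀ x, ∫⁻ y, ‖⟪e x, e y⟫_𝕜‖ₑ ∂μ ≤ M) {h : X → 𝕜} (hh : Measurable h)
    (hhe : Integrable (fun x => h x • e x) μ) :
    ‖∫ x, h x • e x ∂μ‖ₑ ^ 2 ≤ M * ∫⁻ x, ‖h x‖ₑ ^ 2 ∂μ := by
  set v := ∫ x, h x • e x ∂μ
  have hinner : ∀ w : H, ‖⟪w, v⟫_𝕜‖ₑ ≤ ∫⁻ y, ‖h y‖ₑ * ‖⟪w, e y⟫_𝕜‖ₑ ∂μ := fun w => by
    rw [← integral_inner hhe]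
    simpa only [inner_smul_right, enorm_mul] using
      enorm_integral_le_lintegral_enorm fun y => ⟪w, h y • e y⟫_𝕜
  have hk : Measurable (Function.uncurry fun x y => ‖⟪e x, e y⟫_𝕜‖ₑ) :=
    (StronglyMeasurable.inner (by fun_prop) (by fun_prop)).enorm
  calc ‖v‖ₑ ^ 2 = ‖⟪v, v⟫_𝕜‖ₑ := by
        rw [inner_self_eq_norm_sq_to_K, ← RCLike.ofReal_pow, ← ofReal_norm,
          ← ofReal_norm, RCLike.norm_ofReal, abs_of_nonneg (by positivity),
          ENNReal.ofReal_pow (norm_nonneg v)]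
    _ ≤ ∫⁻ x, ‖h x‖ₑ * ‖⟪v, e x⟫_𝕜‖ₑ ∂μ := hinner v
    _ ≤ ∫⁻ x, ‖h x‖ₑ * ∫⁻ y, ‖h y‖ₑ * ‖⟪e x, e y⟫_𝕜‖ₑ ∂μ ∂μ := by
        gcongr with x
        rw [← inner_conj_symm, RCLike.enorm_conj]
        exact hinner (e x)
    _ = ∫⁻ x, ∫⁻ y, ‖⟪e x, e y⟫_𝕜‖ₑ * (‖h x‖ₑ * ‖h y‖ₑ) ∂μ ∂μ := by
        congr! 2 with x
        rw [← lintegral_const_mul _ (by fun_prop)]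
        simp only [mul_assoc, mul_comm ‖⟪e x, e _⟫_𝕜‖ₑ]
    _ ≤ M * ∫⁻ x, ‖h x‖ₑ ^ 2 ∂μ :=
        lintegral_lintegral_mul_le_of_symm hk
          (fun x y => by rw [← inner_conj_symm, RCLike.enorm_conj]) hM hh.enorm

lemma lintegral_enorm_inner_sq_le_enorm_mul_enorm [NormedSpace ℝ H] (f : H)
    (hint : Integrable (fun x => ⟪e x, f⟫_𝕜 • e x) μ) :
    ∫⁻ x, ‖⟪e x, f⟫_𝕜‖ₑ ^ 2 ∂μ ≤ ‖f‖ₑ * ‖∫ x, ⟪e x, f⟫_𝕜 • e x ∂μ‖ₑ := by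
  have hsq : ∀ x, ⟪f, ⟪e x, f⟫_𝕜 • e x⟫_𝕜 = ((‖⟪e x, f⟫_𝕜‖ ^ 2 : ℝ) : 𝕜) := fun x => by
    rw [inner_smul_right, ← inner_conj_symm f, RCLike.mul_conj, RCLike.ofReal_pow]
  have hsqint : Integrable (fun x => ‖⟪e x, f⟫_𝕜‖ ^ 2) μ := by
    simpa only [hsq, RCLike.ofReal_re] using (hint.const_inner (𝕜 := 𝕜) f).re
  have hinner : ⟪f, ∫ x, ⟪e x, f⟫_𝕜 • e x ∂μ⟫_𝕜 = ((∫ x, ‖⟪e x, f⟫_𝕜‖ ^ 2 ∂μ : ℝ) : 𝕜) := by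
    rw [← integral_inner hint, ← integral_ofReal]
    simp only [hsq]
  calc ∫⁻ x, ‖⟪e x, f⟫_𝕜‖ₑ ^ 2 ∂μ = ENNReal.ofReal (∫ x, ‖⟪e x, f⟫_𝕜‖ ^ 2 ∂μ) := by
        rw [ofReal_integral_eq_lintegral_ofReal hsqint (.of_forall fun x => by positivity)]
        simp only [ENNReal.ofReal_pow (norm_nonneg _), ofReal_norm]
    _ ≤ ENNReal.ofReal ‖⟪f, ∫ x, ⟪e x, f⟫_𝕜 • e x ∂μ⟫_𝕜‖ := by
        rw [hinner, RCLike.norm_ofReal]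
        exact ENNReal.ofReal_le_ofReal (le_abs_self _)
    _ ≤ ‖f‖ₑ * ‖∫ x, ⟪e x, f⟫_𝕜 • e x ∂μ‖ₑ := by
        rw [← ofReal_norm f, ← ofReal_norm, ← ENNReal.ofReal_mul (norm_nonneg f)]
        exact ENNReal.ofReal_le_ofReal (norm_inner_le_norm _ _)

lemma lintegral_enorm_inner_sq_le_of_memLp [SFinite μ] (he : StronglyMeasurable e)
    (he2 : MemLp e 2 μ) (hM : ∀ x, ∫⁻ y, ‖⟪e x, e y⟫_𝕜‖ₑ ∂μ ≤ M) (f : H) :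
    ∫⁻ x, ‖⟪e x, f⟫_𝕜‖ₑ ^ 2 ∂μ ≤ M * ‖f‖ₑ ^ 2 := by
  let _ : NormedSpace ℝ H := NormedSpace.restrictScalars ℝ 𝕜 H
  set S := ∫⁻ x, ‖⟪e x, f⟫_𝕜‖ₑ ^ 2 ∂μ with hS
  have hcoef : MemLp (fun x => ⟪e x, f⟫_𝕜) 2 μ := he2.inner_const f
  have hint : Integrable (fun x => ⟪e x, f⟫_𝕜 • e x) μ :=
    memLp_one_iff_integrable.1 (he2.smul hcoef)
  have hfin : S ≠ ∞ := by
    rw [hS, lintegral_enorm_sq]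
    exact (ENNReal.pow_lt_top hcoef.eLpNorm_lt_top).ne
  have hsq : S ^ 2 ≤ ‖f‖ₑ ^ 2 * (M * S) := by
    refine (pow_le_pow_left' (lintegral_enorm_inner_sq_le_enorm_mul_enorm f hint) 2).trans ?_
    rw [mul_pow]
    gcongr
    exact enorm_integral_smul_sq_le he hM
      (he.inner stronglyMeasurable_const).measurable hint
  rcases eq_or_ne S 0 with h0 | h0
  · rw [h0]; exact zero_le
  refine (ENNReal.mul_le_mul_iff_left h0 hfin).1 ?_
  calc S * S = S ^ 2 := (sq S).symm
    _ ≤ ‖f‖ₑ ^ 2 * (M * S) := hsq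
    _ = M * ‖f‖ₑ ^ 2 * S := by ring

/- Selberg's form of Bessel's inequality, for a continuous family of vectors: almost orthogonality
of the `e x` in the sense of Schur's test is all that is needed. -/
theorem lintegral_enorm_inner_sq_le [SigmaFinite μ] (he : StronglyMeasurable e)
    (hM : ∀ x, ∫⁻ y, ‖⟪e x, e y⟫_𝕜‖ₑ ∂μ ≤ M) (f : H) :
    ∫⁻ x, ‖⟪e x, f⟫_𝕜‖ₑ ^ 2 ∂μ ≤ M * ‖f‖ₑ ^ 2 := by
  set s : ℕ → Set X := fun n => spanningSets μ n ∩ {x | ‖e x‖ ≤ n}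
  have hball : Monotone fun n : ℕ => {x | ‖e x‖ ≤ n} := fun m n hmn x (hx : ‖e x‖ ≤ m) =>
    hx.trans (by exact_mod_cast hmn)
  have hs : Monotone s := (monotone_spanningSets μ).inter hball
  have hsU : ⋃ n, s n = Set.univ := by
    rw [Set.iUnion_inter_of_monotone (monotone_spanningSets μ) hball, iUnion_spanningSets,
      Set.univ_inter, Set.iUnion_eq_univ_iff]
    exact fun x => exists_nat_ge ‖e x‖
  rw [← setLIntegral_univ, ← hsU, setLIntegral_iUnion_of_directed _ hs.directed_le]
  refine iSup_le fun n => lintegral_enorm_inner_sq_le_of_memLp he ?_ (fun x => ?_) f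
  · have : IsFiniteMeasure (μ.restrict (s n)) := ⟨by
      rw [Measure.restrict_apply_univ]
      exact (measure_mono Set.inter_subset_left).trans_lt (measure_spanningSets_lt_top μ n)⟩
    have hmeas : MeasurableSet (s n) :=
      (measurableSet_spanningSets μ n).inter (he.norm.measurable measurableSet_Iic)
    exact .of_bound he.aestronglyMeasurable n <| (ae_restrict_mem hmeas).mono fun x hx => hx.2
  · exact (setLIntegral_le_lintegral _ _).trans (hM x)

end GeneralizedBessel

section OscillatoryIntegrals

variable {p q : ℝ} {φ φ₁ φ₂ φ₃ g g₁ g₂ v v₁ : ℝ → ℝ} {m A G : ℝ}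

lemma intervalIntegrable_cexp_mul (hφ : ContinuousOn φ (Set.uIcc p q))
    (hg : ContinuousOn g (Set.uIcc p q)) :
    IntervalIntegrable (fun x => Complex.exp (Complex.I * φ x) * g x) volume p q :=
  ContinuousOn.intervalIntegrable (by fun_prop)

lemma integral_cexp_mul_deriv_mul
    (hφ : ∀ x ∈ Set.uIcc p q, HasDerivAt φ (φ₁ x) x) (hφ₁ : ContinuousOn φ₁ (Set.uIcc p q))
    (hg : ∀ x ∈ Set.uIcc p q, HasDerivAt g (g₁ x) x) (hg₁ : ContinuousOn g₁ (Set.uIcc p q))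
    (hp : g p = 0) (hq : g q = 0) :
    ∫ x in p..q, Complex.exp (Complex.I * φ x) * ↑(φ₁ x * g x) =
      Complex.I * ∫ x in p..q, Complex.exp (Complex.I * φ x) * g₁ x := by
  have hφc := HasDerivAt.continuousOn hφ
  have parts := intervalIntegral.integral_mul_deriv_eq_deriv_mul
    (fun x hx => ((hφ x hx).ofReal_comp.const_mul Complex.I).cexp)
    (fun x hx => (hg x hx).ofReal_comp)
    (ContinuousOn.intervalIntegrable (by fun_prop)) (ContinuousOn.intervalIntegrable (by fun_prop))
  rw [parts, hp, hq, Complex.ofReal_zero, mul_zero, mul_zero, sub_zero, zero_sub,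
    mul_neg, ← intervalIntegral.integral_const_mul, ← intervalIntegral.integral_neg]
  congr 1 with x
  push_cast
  linear_combination (Complex.exp (Complex.I * φ x) * φ₁ x * g x) * Complex.I_sq

/- Integrating by parts against `φ₁ v` in place of `1`: `v = 1 / φ₁` is the usual choice away from
critical points, `v = φ₁ / (φ₁ ^ 2 + m)` its regularisation near them. -/
lemma integral_cexp_mul_eq_multiplier
    (hφ : ∀ x ∈ Set.uIcc p q, HasDerivAt φ (φ₁ x) x) (hφ₁ : ContinuousOn φ₁ (Set.uIcc p q))
    (hg : ∀ x ∈ Set.uIcc p q, HasDerivAt g (g₁ x) x) (hg₁ : ContinuousOn g₁ (Set.uIcc p q))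
    (hv : ∀ x ∈ Set.uIcc p q, HasDerivAt v (v₁ x) x) (hv₁ : ContinuousOn v₁ (Set.uIcc p q))
    (hp : g p = 0) (hq : g q = 0) :
    ∫ x in p..q, Complex.exp (Complex.I * φ x) * g x =
      (Complex.I * ∫ x in p..q, Complex.exp (Complex.I * φ x) * ↑(g₁ x * v x + g x * v₁ x)) +
        ∫ x in p..q, Complex.exp (Complex.I * φ x) * ↑(g x * (1 - φ₁ x * v x)) := by
  have hφc := HasDerivAt.continuousOn hφ
  have hgc := HasDerivAt.continuousOn hg
  have hvc := HasDerivAt.continuousOn hv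
  rw [← integral_cexp_mul_deriv_mul hφ hφ₁ (fun x hx => (hg x hx).mul (hv x hx)) (by fun_prop)
      (by simp [hp]) (by simp [hq]),
    ← intervalIntegral.integral_add (intervalIntegrable_cexp_mul hφc (by fun_prop))
      (intervalIntegrable_cexp_mul hφc (by fun_prop))]
  congr 1 with x
  simp only [Pi.mul_apply]
  push_cast
  ring

lemma norm_cexp_I_mul_ofReal_mul_ofReal (x y : ℝ) :
    ‖Complex.exp (Complex.I * x) * (y : ℂ)‖ = |y| := by
  rw [norm_mul, Complex.norm_exp_I_mul_ofReal, one_mul, Complex.norm_real, Real.norm_eq_abs]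

lemma norm_integral_cexp_mul_le (hpq : p ≤ q) :
    ‖∫ x in p..q, Complex.exp (Complex.I * φ x) * g x‖ ≤ ∫ x in p..q, |g x| := by
  refine (intervalIntegral.norm_integral_le_integral_norm hpq).trans_eq ?_
  simp only [norm_cexp_I_mul_ofReal_mul_ofReal]

lemma hasDerivAt_div_sq_add {w : ℝ → ℝ} {w' x : ℝ} (hm : 0 < m) (hw : HasDerivAt w w' x) :
    HasDerivAt (fun y => w y / (w y ^ 2 + m)) (w' * (m - w x ^ 2) / (w x ^ 2 + m) ^ 2) x := by
  have hW : w x ^ 2 + m ≠ 0 := by positivity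
  refine (hw.div ((hw.pow 2).add_const m) hW).congr_deriv ?_
  congr 1
  simp only [Pi.pow_apply]
  push_cast
  ring

lemma abs_div_sq_add_le (hm : 0 < m) (w : ℝ) : |w / (w ^ 2 + m)| ≤ 1 / √m := by
  rw [abs_div, abs_of_pos (by positivity : 0 < w ^ 2 + m), div_le_div_iff₀ (by positivity)
    (by positivity)]
  nlinarith [sq_nonneg (|w| - √m), sq_abs w, abs_nonneg w, Real.sq_sqrt hm.le, Real.sqrt_nonneg m]

lemma abs_mul_sub_sq_div_le (hm : 0 < m) (w w' : ℝ) :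
    |w' * (m - w ^ 2) / (w ^ 2 + m) ^ 2| ≤ |w'| / (w ^ 2 + m) := by
  have hW : 0 < w ^ 2 + m := by positivity
  have hle : |m - w ^ 2| ≤ w ^ 2 + m := by
    rw [abs_le]; constructor <;> nlinarith [sq_nonneg w]
  calc |w' * (m - w ^ 2) / (w ^ 2 + m) ^ 2| = |w'| * |m - w ^ 2| / (w ^ 2 + m) ^ 2 := by
        rw [abs_div, abs_mul, abs_of_pos (pow_pos hW 2)]
    _ ≤ |w'| * (w ^ 2 + m) / (w ^ 2 + m) ^ 2 := by gcongr
    _ = |w'| / (w ^ 2 + m) := by field_simp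

lemma exists_abs_eq_mul_of_continuousOn_Icc {w : ℝ → ℝ} (hw : ContinuousOn w (Set.Icc p q))
    (hne : ∀ x ∈ Set.Icc p q, w x ≠ 0) :
    ∃ σ : ℝ, |σ| = 1 ∧ ∀ x ∈ Set.Icc p q, |w x| = σ * w x := by
  rcases isPreconnected_Icc.eq_or_eq_neg_of_sq_eq hw.abs hw (fun x _ => sq_abs (w x))
    (fun {x} hx => hne x hx) with h | h
  · exact ⟨1, by simp, fun x hx => by simpa using h hx⟩
  · exact ⟨-1, by simp, fun x hx => by simpa using h hx⟩

lemma integral_abs_deriv_div_sq_add_le {w w' : ℝ → ℝ} (hpq : p ≤ q) (hm : 0 < m)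
    (hw : ∀ x ∈ Set.Icc p q, HasDerivAt w (w' x) x) (hw' : ContinuousOn w' (Set.Icc p q))
    (hne : ∀ x ∈ Set.Icc p q, w' x ≠ 0) :
    ∫ x in p..q, |w' x| / (w x ^ 2 + m) ≤ π / √m := by
  obtain ⟨σ, hσ, habs⟩ := exists_abs_eq_mul_of_continuousOn_Icc hw' hne
  have hwc := HasDerivAt.continuousOn hw
  have hW : ∀ x ∈ Set.Icc p q, w x ^ 2 + m ≠ 0 := fun x _ => by positivity
  rw [← Set.uIcc_of_le hpq] at *
  have harctan : ∀ x ∈ Set.uIcc p q, HasDerivAt (fun x => σ * (arctan (w x / √m) / √m))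
      (|w' x| / (w x ^ 2 + m)) x := fun x hx => by
    refine ((((hw x hx).div_const (√m)).arctan.div_const (√m)).const_mul σ).congr_deriv ?_
    have hsq : 1 + (w x / √m) ^ 2 = (w x ^ 2 + m) / m := by
      rw [div_pow, Real.sq_sqrt hm.le]; field_simp; ring
    rw [hsq, habs x hx]
    have := hW x hx
    field_simp
    rw [Real.sq_sqrt hm.le]
    ring
  rw [intervalIntegral.integral_eq_sub_of_hasDerivAt harctan
    (ContinuousOn.intervalIntegrable (by fun_prop (disch := assumption))), ← mul_sub, ← sub_div,
    ← mul_div_assoc]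
  gcongr
  refine (le_abs_self _).trans ?_
  rw [abs_mul, hσ, one_mul, abs_le]
  have := arctan_lt_pi_div_two (w q / √m)
  have := arctan_lt_pi_div_two (w p / √m)
  have := neg_pi_div_two_lt_arctan (w q / √m)
  have := neg_pi_div_two_lt_arctan (w p / √m)
  constructor <;> linarith

lemma abs_add_mul_div_sq_add_le (hm : 0 < m) {y y₁ w w₁ : ℝ} (hy : |y| ≤ G) (hy₁ : |y₁| ≤ G) :
    |y₁ * (w / (w ^ 2 + m)) + y * (w₁ * (m - w ^ 2) / (w ^ 2 + m) ^ 2)| ≤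
      G * (1 / √m) + G * (|w₁| / (w ^ 2 + m)) := by
  have hG : 0 ≤ G := (abs_nonneg _).trans hy
  refine (abs_add_le _ _).trans ?_
  rw [abs_mul, abs_mul]
  gcongr
  exacts [abs_div_sq_add_le hm _, abs_mul_sub_sq_div_le hm _ _]

lemma abs_mul_one_sub_mul_div_sq_add_le (hm : 0 < m) {y w w₁ : ℝ} (hy : |y| ≤ G)
    (hw₁ : m ≤ |w₁|) :
    |y * (1 - w * (w / (w ^ 2 + m)))| ≤ G * (|w₁| / (w ^ 2 + m)) := by
  have hG : 0 ≤ G := (abs_nonneg _).trans hy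
  have hpos : 0 < w ^ 2 + m := by positivity
  have heq : 1 - w * (w / (w ^ 2 + m)) = m / (w ^ 2 + m) := by field_simp; ring
  rw [heq, abs_mul, abs_of_pos (div_pos hm hpos)]
  gcongr

lemma norm_integral_cexp_mul_le_of_le_abs_deriv2 (hpq : p ≤ q) (hm : 0 < m)
    (hφ : ∀ x ∈ Set.Icc p q, HasDerivAt φ (φ₁ x) x)
    (hφ₁ : ∀ x ∈ Set.Icc p q, HasDerivAt φ₁ (φ₂ x) x) (hφ₂ : ContinuousOn φ₂ (Set.Icc p q))
    (hg : ∀ x ∈ Set.Icc p q, HasDerivAt g (g₁ x) x) (hg₁ : ContinuousOn g₁ (Set.Icc p q))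
    (hp : g p = 0) (hq : g q = 0)
    (hgG : ∀ x ∈ Set.Icc p q, |g x| ≤ G) (hg₁G : ∀ x ∈ Set.Icc p q, |g₁ x| ≤ G)
    (hlow : ∀ x ∈ Set.Icc p q, m ≤ |φ₂ x|) :
    ‖∫ x in p..q, Complex.exp (Complex.I * φ x) * g x‖ ≤ G * (q - p + 2 * π) / √m := by
  have hG : 0 ≤ G := (abs_nonneg _).trans (hgG p ⟨le_rfl, hpq⟩)
  have hW : ∀ x ∈ Set.Icc p q, φ₁ x ^ 2 + m ≠ 0 := fun x _ => by positivity
  have hW2 : ∀ x ∈ Set.Icc p q, (φ₁ x ^ 2 + m) ^ 2 ≠ 0 := fun x _ => by positivity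
  have hgc := HasDerivAt.continuousOn hg
  have hφc := HasDerivAt.continuousOn hφ
  have hφ₁c := HasDerivAt.continuousOn hφ₁
  have hmain := integral_abs_deriv_div_sq_add_le hpq hm hφ₁ hφ₂
    fun x hx => abs_pos.1 (hm.trans_le (hlow x hx))
  rw [← Set.uIcc_of_le hpq] at hφ hφ₁ hφ₂ hg hg₁ hW hW2 hgc hφc hφ₁c
  rw [integral_cexp_mul_eq_multiplier hφ hφ₁c hg hg₁
    (fun x hx => hasDerivAt_div_sq_add hm (hφ₁ x hx)) (by fun_prop (disch := assumption)) hp hq]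
  have hint : IntervalIntegrable (fun x => G * (|φ₂ x| / (φ₁ x ^ 2 + m))) volume p q :=
    ContinuousOn.intervalIntegrable (by fun_prop (disch := assumption))
  calc
    _ ≤ (∫ x in p..q, |g₁ x * (φ₁ x / (φ₁ x ^ 2 + m)) +
          g x * (φ₂ x * (m - φ₁ x ^ 2) / (φ₁ x ^ 2 + m) ^ 2)|) +
        ∫ x in p..q, |g x * (1 - φ₁ x * (φ₁ x / (φ₁ x ^ 2 + m)))| := by
      refine (norm_add_le _ _).trans (add_le_add ?_ (norm_integral_cexp_mul_le hpq))
      rw [norm_mul, Complex.norm_I, one_mul]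
      exact norm_integral_cexp_mul_le hpq
    _ ≤ (∫ x in p..q, G * (1 / √m) + G * (|φ₂ x| / (φ₁ x ^ 2 + m))) +
        ∫ x in p..q, G * (|φ₂ x| / (φ₁ x ^ 2 + m)) := by
      refine add_le_add
        (intervalIntegral.integral_mono_on hpq ?_ (intervalIntegrable_const.add hint)
          fun x hx => abs_add_mul_div_sq_add_le hm (hgG x hx) (hg₁G x hx))
        (intervalIntegral.integral_mono_on hpq ?_ hint
          fun x hx => abs_mul_one_sub_mul_div_sq_add_le hm (hgG x hx) (hlow x hx)) <;>
      exact ContinuousOn.intervalIntegrable (by fun_prop (disch := assumption))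
    _ = (q - p) * (G * (1 / √m)) + 2 * (G * ∫ x in p..q, |φ₂ x| / (φ₁ x ^ 2 + m)) := by
      rw [intervalIntegral.integral_add intervalIntegrable_const hint,
        intervalIntegral.integral_const, intervalIntegral.integral_const_mul, smul_eq_mul]
      ring
    _ ≤ (q - p) * (G * (1 / √m)) + 2 * (G * (π / √m)) := by gcongr
    _ = G * (q - p + 2 * π) / √m := by ring

lemma integral_cexp_mul_eq_integral_deriv_div
    (hφ : ∀ x ∈ Set.uIcc p q, HasDerivAt φ (φ₁ x) x)
    (hφ₁ : ∀ x ∈ Set.uIcc p q, HasDerivAt φ₁ (φ₂ x) x) (hφ₂ : ContinuousOn φ₂ (Set.uIcc p q))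
    (hg : ∀ x ∈ Set.uIcc p q, HasDerivAt g (g₁ x) x) (hg₁ : ContinuousOn g₁ (Set.uIcc p q))
    (hne : ∀ x ∈ Set.uIcc p q, φ₁ x ≠ 0) (hp : g p = 0) (hq : g q = 0) :
    ∫ x in p..q, Complex.exp (Complex.I * φ x) * g x =
      Complex.I * ∫ x in p..q, Complex.exp (Complex.I * φ x) *
        ↑(g₁ x * (φ₁ x)⁻¹ - g x * φ₂ x * (φ₁ x)⁻¹ ^ 2) := by
  have hφ₁c := HasDerivAt.continuousOn hφ₁
  rw [integral_cexp_mul_eq_multiplier hφ hφ₁c hg hg₁ (v := fun x => (φ₁ x)⁻¹)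
    (v₁ := fun x => -φ₂ x * (φ₁ x)⁻¹ ^ 2)
    (fun x hx => ((hφ₁ x hx).inv (hne x hx)).congr_deriv (by ring))
    (by fun_prop (disch := assumption)) hp hq, add_eq_left.2]
  · simp only [neg_mul, mul_neg, ← sub_eq_add_neg, mul_assoc]
  · refine (intervalIntegral.integral_congr fun x hx => ?_).trans intervalIntegral.integral_zero
    simp [mul_inv_cancel₀ (hne x hx)]

lemma abs_mul_inv_sub_mul_inv_sq_le (hA : 0 < A) {y y₁ w w₁ : ℝ} (hy : |y| ≤ G) (hy₁ : |y₁| ≤ G)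
    (hw : A ≤ |w|) (hw₁ : |w₁| ≤ A) : |y₁ * w⁻¹ - y * w₁ * w⁻¹ ^ 2| ≤ 2 * G / A := by
  have hG : 0 ≤ G := (abs_nonneg _).trans hy
  have hinv : |w|⁻¹ ≤ A⁻¹ := inv_anti₀ hA hw
  calc |y₁ * w⁻¹ - y * w₁ * w⁻¹ ^ 2| ≤ |y₁| * |w|⁻¹ + |y| * |w₁| * |w|⁻¹ ^ 2 := by
        rw [← abs_inv, ← abs_pow, ← abs_mul, ← abs_mul, ← abs_mul]
        exact abs_sub _ _
    _ ≤ G * A⁻¹ + G * A * A⁻¹ ^ 2 := by gcongr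
    _ = 2 * G / A := by field_simp; ring

lemma norm_integral_cexp_mul_le_of_le_abs_deriv (hpq : p ≤ q) (hA : 0 < A)
    (hφ : ∀ x ∈ Set.Icc p q, HasDerivAt φ (φ₁ x) x)
    (hφ₁ : ∀ x ∈ Set.Icc p q, HasDerivAt φ₁ (φ₂ x) x) (hφ₂ : ContinuousOn φ₂ (Set.Icc p q))
    (hg : ∀ x ∈ Set.Icc p q, HasDerivAt g (g₁ x) x) (hg₁ : ContinuousOn g₁ (Set.Icc p q))
    (hp : g p = 0) (hq : g q = 0)
    (hgG : ∀ x ∈ Set.Icc p q, |g x| ≤ G) (hg₁G : ∀ x ∈ Set.Icc p q, |g₁ x| ≤ G)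
    (hlow : ∀ x ∈ Set.Icc p q, A ≤ |φ₁ x|) (hup : ∀ x ∈ Set.Icc p q, |φ₂ x| ≤ A) :
    ‖∫ x in p..q, Complex.exp (Complex.I * φ x) * g x‖ ≤ 2 * G / A * (q - p) := by
  rw [← Set.uIcc_of_le hpq] at *
  rw [integral_cexp_mul_eq_integral_deriv_div hφ hφ₁ hφ₂ hg hg₁
    (fun x hx => abs_pos.1 (hA.trans_le (hlow x hx))) hp hq, norm_mul, Complex.norm_I, one_mul,
    ← abs_of_nonneg (sub_nonneg.2 hpq)]
  refine intervalIntegral.norm_integral_le_of_norm_le_const fun x hx => ?_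
  replace hx := Set.uIoc_subset_uIcc hx
  rw [norm_cexp_I_mul_ofReal_mul_ofReal]
  exact abs_mul_inv_sub_mul_inv_sq_le hA (hgG x hx) (hg₁G x hx) (hlow x hx) (hup x hx)

lemma hasDerivAt_mul_inv_sub_mul_inv_sq {x : ℝ} (hφ₁ : HasDerivAt φ₁ (φ₂ x) x)
    (hφ₂ : HasDerivAt φ₂ (φ₃ x) x) (hg : HasDerivAt g (g₁ x) x) (hg₁ : HasDerivAt g₁ (g₂ x) x)
    (hne : φ₁ x ≠ 0) :
    HasDerivAt (fun x => g₁ x * (φ₁ x)⁻¹ - g x * φ₂ x * (φ₁ x)⁻¹ ^ 2)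
      ((g₂ x * (φ₁ x)⁻¹ - g₁ x * φ₂ x * (φ₁ x)⁻¹ ^ 2) -
        (g₁ x * φ₂ x * (φ₁ x)⁻¹ ^ 2 + g x * φ₃ x * (φ₁ x)⁻¹ ^ 2 -
          2 * (g x * φ₂ x ^ 2 * (φ₁ x)⁻¹ ^ 3))) x := by
  have hinv := hφ₁.inv hne
  refine ((hg₁.mul hinv).sub ((hg.mul hφ₂).mul (hinv.pow 2))).congr_deriv ?_
  simp only [Pi.inv_apply, Pi.mul_apply, Pi.pow_apply]
  push_cast
  ring

lemma abs_deriv_mul_inv_sub_mul_inv_sq_le (hA : 0 < A) {y y₁ y₂ w w₁ w₂ : ℝ} (hy : |y| ≤ G)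
    (hy₁ : |y₁| ≤ G) (hy₂ : |y₂| ≤ G) (hw : A ≤ |w|) (hw₁ : |w₁| ≤ A) (hw₂ : |w₂| ≤ A) :
    |(y₂ * w⁻¹ - y₁ * w₁ * w⁻¹ ^ 2) -
        (y₁ * w₁ * w⁻¹ ^ 2 + y * w₂ * w⁻¹ ^ 2 - 2 * (y * w₁ ^ 2 * w⁻¹ ^ 3))| ≤ 6 * G / A := by
  have hG : 0 ≤ G := (abs_nonneg _).trans hy
  have hinv : |w|⁻¹ ≤ A⁻¹ := inv_anti₀ hA hw
  calc
    _ ≤ |y₂ * w⁻¹ - y₁ * w₁ * w⁻¹ ^ 2| +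
        (|y₁ * w₁ * w⁻¹ ^ 2| + |y * w₂ * w⁻¹ ^ 2| + |2 * (y * w₁ ^ 2 * w⁻¹ ^ 3)|) :=
      (abs_sub _ _).trans (by gcongr; exact (abs_sub _ _).trans (by gcongr; exact abs_add_le _ _))
    _ ≤ 2 * G / A + (G * A * A⁻¹ ^ 2 + G * A * A⁻¹ ^ 2 + 2 * (G * A ^ 2 * A⁻¹ ^ 3)) := by
      refine add_le_add (abs_mul_inv_sub_mul_inv_sq_le hA hy₁ hy₂ hw hw₁) ?_
      simp only [abs_mul, abs_pow, abs_inv, abs_two]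
      gcongr
    _ = 6 * G / A := by field_simp; ring

lemma norm_integral_cexp_mul_le_of_le_abs_deriv_sq (hpq : p ≤ q) (hA : 0 < A)
    (hφ : ∀ x ∈ Set.Icc p q, HasDerivAt φ (φ₁ x) x)
    (hφ₁ : ∀ x ∈ Set.Icc p q, HasDerivAt φ₁ (φ₂ x) x)
    (hφ₂ : ∀ x ∈ Set.Icc p q, HasDerivAt φ₂ (φ₃ x) x) (hφ₃ : ContinuousOn φ₃ (Set.Icc p q))
    (hg : ∀ x ∈ Set.Icc p q, HasDerivAt g (g₁ x) x)
    (hg₁ : ∀ x ∈ Set.Icc p q, HasDerivAt g₁ (g₂ x) x) (hg₂ : ContinuousOn g₂ (Set.Icc p q))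
    (hp : g p = 0) (hq : g q = 0) (hp₁ : g₁ p = 0) (hq₁ : g₁ q = 0)
    (hgG : ∀ x ∈ Set.Icc p q, |g x| ≤ G) (hg₁G : ∀ x ∈ Set.Icc p q, |g₁ x| ≤ G)
    (hg₂G : ∀ x ∈ Set.Icc p q, |g₂ x| ≤ G) (hlow : ∀ x ∈ Set.Icc p q, A ≤ |φ₁ x|)
    (hup₂ : ∀ x ∈ Set.Icc p q, |φ₂ x| ≤ A) (hup₃ : ∀ x ∈ Set.Icc p q, |φ₃ x| ≤ A) :
    ‖∫ x in p..q, Complex.exp (Complex.I * φ x) * g x‖ ≤ 12 * G * (q - p) / A ^ 2 := by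
  have hne : ∀ x ∈ Set.Icc p q, φ₁ x ≠ 0 := fun x hx => abs_pos.1 (hA.trans_le (hlow x hx))
  have hG : 0 ≤ G := (abs_nonneg _).trans (hgG p ⟨le_rfl, hpq⟩)
  have hgc := HasDerivAt.continuousOn hg
  have hg₁c := HasDerivAt.continuousOn hg₁
  have hφ₁c := HasDerivAt.continuousOn hφ₁
  have hφ₂c := HasDerivAt.continuousOn hφ₂
  have huIcc := Set.uIcc_of_le hpq
  rw [integral_cexp_mul_eq_integral_deriv_div (huIcc ▸ hφ) (huIcc ▸ hφ₁) (huIcc ▸ hφ₂c)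
    (huIcc ▸ hg) (huIcc ▸ hg₁c) (huIcc ▸ hne) hp hq, norm_mul, Complex.norm_I, one_mul]
  refine (norm_integral_cexp_mul_le_of_le_abs_deriv hpq hA hφ hφ₁ hφ₂c
    (fun x hx => hasDerivAt_mul_inv_sub_mul_inv_sq (hφ₁ x hx) (hφ₂ x hx) (hg x hx) (hg₁ x hx)
      (hne x hx)) (by fun_prop (disch := assumption)) (by simp [hp, hp₁]) (by simp [hq, hq₁])
    (fun x hx => (abs_mul_inv_sub_mul_inv_sq_le hA (hgG x hx) (hg₁G x hx) (hlow x hx)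
      (hup₂ x hx)).trans (by gcongr; norm_num))
    (fun x hx => abs_deriv_mul_inv_sub_mul_inv_sq_le hA (hgG x hx) (hg₁G x hx) (hg₂G x hx)
      (hlow x hx) (hup₂ x hx) (hup₃ x hx)) hlow hup₂).trans_eq ?_
  field_simp
  ring

lemma exists_bound_of_continuousOn_three {K : Set ℝ} (hK : IsCompact K) {f₁ f₂ f₃ : ℝ → ℝ}
    (h₁ : ContinuousOn f₁ K) (h₂ : ContinuousOn f₂ K) (h₃ : ContinuousOn f₃ K) :
    ∃ M > 0, ∀ x ∈ K, |f₁ x| ≤ M ∧ |f₂ x| ≤ M ∧ |f₃ x| ≤ M := by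
  obtain ⟨M, hM⟩ := hK.exists_bound_of_continuousOn (h₁.prodMk (h₂.prodMk h₃))
  refine ⟨max M 1, by positivity, fun x hx => ?_⟩
  have hle := (hM x hx).trans (le_max_left M 1)
  rw [norm_prod_le_iff, norm_prod_le_iff] at hle
  exact hle

lemma exists_bound_deriv2 (hg : ContDiff ℝ 2 g) (p q : ℝ) :
    ∃ M > 0, ∀ x ∈ Set.Icc p q, |g x| ≤ M ∧ |deriv g x| ≤ M ∧ |deriv (deriv g) x| ≤ M :=
  have hg' : ContDiff ℝ 1 (deriv g) := hg.deriv'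
  exists_bound_of_continuousOn_three isCompact_Icc hg.continuous.continuousOn
    hg'.continuous.continuousOn (hg'.continuous_deriv le_rfl).continuousOn

/-- The oscillatory integral `∫ exp (i (A x + B γ x)) g x dx` with phase `A x + B γ x` and real
amplitude `g`. -/
def oscillatoryIntegral (γ g : ℝ → ℝ) (A B : ℝ) : ℂ :=
  ∫ x, Complex.exp (Complex.I * ↑(A * x + B * γ x)) * g x

/-- An integrable bound, uniform in `K * |B| ≤ Y`, for `A ↦ ‖oscillatoryIntegral γ g A B‖`: decay
away from the critical range `|A| ≤ Y`, and van der Corput's square root decay inside it. -/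
def oscillatoryMajorant (Y A : ℝ) : ℝ :=
  (1 + A ^ 2)⁻¹ + (Set.Icc (-Y) Y).indicator (fun x => (√|x|)⁻¹) A

lemma measurable_oscillatoryMajorant (Y : ℝ) : Measurable (oscillatoryMajorant Y) := by
  unfold oscillatoryMajorant
  exact .add (by fun_prop) (Measurable.indicator (by fun_prop) measurableSet_Icc)

lemma oscillatoryMajorant_nonneg (Y A : ℝ) : 0 ≤ oscillatoryMajorant Y A :=
  add_nonneg (by positivity) (Set.indicator_nonneg (fun _ _ => by positivity) A)

lemma integral_inv_sqrt {Y : ℝ} (hY : 0 ≤ Y) : ∫ x in 0..Y, (√x)⁻¹ = 2 * √Y := by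
  have hrpow : ∀ x ∈ Set.uIcc 0 Y, (√x)⁻¹ = x ^ (-(1 / 2) : ℝ) := fun x hx => by
    rw [Set.uIcc_of_le hY] at hx
    rw [Real.sqrt_eq_rpow, Real.rpow_neg hx.1]
  rw [intervalIntegral.integral_congr hrpow, integral_rpow (Or.inl (by norm_num)),
    Real.sqrt_eq_rpow]
  norm_num
  ring

lemma integral_indicator_inv_sqrt_abs {Y : ℝ} (hY : 0 ≤ Y) :
    ∫ x, (Set.Icc (-Y) Y).indicator (fun x => (√|x|)⁻¹) x = 4 * √Y := by
  have habs : ∀ x, (Set.Icc (-Y) Y).indicator (fun x => (√|x|)⁻¹) x =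
      (Set.Iic Y).indicator (fun y => (√y)⁻¹) |x| := fun x => by
    simp only [Set.indicator_apply, Set.mem_Icc, Set.mem_Iic, abs_le]
  simp only [habs]
  rw [integral_comp_abs, setIntegral_indicator measurableSet_Iic, Set.Ioi_inter_Iic,
    ← intervalIntegral.integral_of_le hY, integral_inv_sqrt hY]
  ring

lemma lintegral_oscillatoryMajorant {Y : ℝ} (hY : 0 < Y) :
    ∫⁻ x, ENNReal.ofReal (oscillatoryMajorant Y x) = ENNReal.ofReal (π + 4 * √Y) := by
  have hint : Integrable ((Set.Icc (-Y) Y).indicator fun x : ℝ => (√|x|)⁻¹) :=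
    .of_integral_ne_zero (by rw [integral_indicator_inv_sqrt_abs hY.le]; positivity)
  have hmaj : Integrable (oscillatoryMajorant Y) := integrable_inv_one_add_sq.add hint
  rw [← ofReal_integral_eq_lintegral_ofReal hmaj
    (.of_forall (oscillatoryMajorant_nonneg Y))]
  simp only [oscillatoryMajorant]
  rw [integral_add integrable_inv_one_add_sq hint, integral_univ_inv_one_add_sq,
    integral_indicator_inv_sqrt_abs hY.le]

section LinearPerturbation

variable {γ γ₁ γ₂ γ₃ : ℝ → ℝ}

lemma oscillatoryIntegral_eq_intervalIntegral (hgs : tsupport g ⊆ Set.Ioo p q) (A B : ℝ) :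
    oscillatoryIntegral γ g A B =
      ∫ x in p..q, Complex.exp (Complex.I * ↑(A * x + B * γ x)) * g x := by
  refine (intervalIntegral.integral_eq_integral_of_support_subset ?_).symm
  refine (Function.support_mul_subset_right _ _).trans fun x hx => ?_
  exact Set.Ioo_subset_Ioc_self (hgs (subset_tsupport g (by simpa using hx)))

lemma eq_zero_of_tsupport_subset (hgs : tsupport g ⊆ Set.Ioo p q) {x : ℝ} (hx : x ∉ Set.Ioo p q) :
    g x = 0 :=
  image_eq_zero_of_notMem_tsupport fun h => hx (hgs h)

lemma norm_oscillatoryIntegral_le (hpq : p ≤ q) (hgs : tsupport g ⊆ Set.Ioo p q)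
    (hG : ∀ x ∈ Set.Icc p q, |g x| ≤ G) (A B : ℝ) :
    ‖oscillatoryIntegral γ g A B‖ ≤ G * (q - p) := by
  rw [oscillatoryIntegral_eq_intervalIntegral hgs, ← abs_of_nonneg (sub_nonneg.2 hpq)]
  refine intervalIntegral.norm_integral_le_of_norm_le_const fun x hx => ?_
  rw [norm_cexp_I_mul_ofReal_mul_ofReal]
  exact hG x (Set.uIcc_of_le hpq ▸ Set.uIoc_subset_uIcc hx)

lemma exists_norm_oscillatoryIntegral_le_inv_sq (hpq : p < q)
    (hγ : ∀ x ∈ Set.Icc p q, HasDerivAt γ (γ₁ x) x)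
    (hγ₁ : ∀ x ∈ Set.Icc p q, HasDerivAt γ₁ (γ₂ x) x)
    (hγ₂ : ∀ x ∈ Set.Icc p q, HasDerivAt γ₂ (γ₃ x) x) (hγ₃ : ContinuousOn γ₃ (Set.Icc p q))
    (hg : ContDiff ℝ 2 g) (hgs : tsupport g ⊆ Set.Ioo p q) :
    ∃ K > 0, ∃ C > 0, ∀ A B : ℝ, A ≠ 0 → K * |B| ≤ |A| →
      ‖oscillatoryIntegral γ g A B‖ ≤ C / A ^ 2 := by
  obtain ⟨G, hG, hgG⟩ := exists_bound_deriv2 hg p q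
  obtain ⟨D, hD, hγD⟩ := exists_bound_of_continuousOn_three isCompact_Icc
    (HasDerivAt.continuousOn hγ₁) (HasDerivAt.continuousOn hγ₂) hγ₃
  have hg' : ContDiff ℝ 1 (deriv g) := hg.deriv'
  have hgs' : tsupport (deriv g) ⊆ Set.Ioo p q := tsupport_deriv_subset.trans hgs
  refine ⟨2 * D, by positivity, 48 * G * (q - p), ?_, fun A B hA hBA => ?_⟩
  · have := sub_pos.2 hpq
    positivity
  have hBD : ∀ y : ℝ, |y| ≤ D → |B * y| ≤ |A| / 2 := fun y hy => by
    rw [abs_mul]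
    nlinarith [mul_le_mul_of_nonneg_left hy (abs_nonneg B)]
  rw [oscillatoryIntegral_eq_intervalIntegral hgs]
  refine (norm_integral_cexp_mul_le_of_le_abs_deriv_sq (A := |A| / 2) hpq.le (by positivity)
    (fun x hx => ((hasDerivAt_id x).const_mul A).add ((hγ x hx).const_mul B))
    (fun x hx => ((hγ₁ x hx).const_mul B).const_add (A * 1))
    (fun x hx => (hγ₂ x hx).const_mul B) (by fun_prop)
    (fun x _ => (hg.differentiable two_ne_zero x).hasDerivAt)
    (fun x _ => (hg'.differentiable one_ne_zero x).hasDerivAt)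
    (hg'.continuous_deriv le_rfl).continuousOn
    (eq_zero_of_tsupport_subset hgs (by simp)) (eq_zero_of_tsupport_subset hgs (by simp))
    (eq_zero_of_tsupport_subset hgs' (by simp)) (eq_zero_of_tsupport_subset hgs' (by simp))
    (fun x hx => (hgG x hx).1) (fun x hx => (hgG x hx).2.1) (fun x hx => (hgG x hx).2.2)
    (fun x hx => ?_) (fun x hx => hBD _ (hγD x hx).2.1)
    (fun x hx => hBD _ (hγD x hx).2.2)).trans_eq ?_
  · have := abs_sub_abs_le_abs_add (A * 1) (B * γ₁ x)
    have := hBD _ (hγD x hx).1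
    rw [mul_one] at *
    linarith
  · rw [div_pow, sq_abs]
    field_simp
    ring

lemma exists_norm_oscillatoryIntegral_le_inv_one_add_sq (hpq : p < q)
    (hγ : ∀ x ∈ Set.Icc p q, HasDerivAt γ (γ₁ x) x)
    (hγ₁ : ∀ x ∈ Set.Icc p q, HasDerivAt γ₁ (γ₂ x) x)
    (hγ₂ : ∀ x ∈ Set.Icc p q, HasDerivAt γ₂ (γ₃ x) x) (hγ₃ : ContinuousOn γ₃ (Set.Icc p q))
    (hg : ContDiff ℝ 2 g) (hgs : tsupport g ⊆ Set.Ioo p q) :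
    ∃ K > 0, ∃ C > 0, ∀ A B : ℝ, K * |B| ≤ |A| →
      ‖oscillatoryIntegral γ g A B‖ ≤ C * (1 + A ^ 2)⁻¹ := by
  obtain ⟨G, hG, hgG⟩ := exists_bound_deriv2 hg p q
  obtain ⟨K, hK, C, hC, hdecay⟩ :=
    exists_norm_oscillatoryIntegral_le_inv_sq hpq hγ hγ₁ hγ₂ hγ₃ hg hgs
  refine ⟨K, hK, G * (q - p) + C, add_pos (mul_pos hG (sub_pos.2 hpq)) hC, fun A B hBA => ?_⟩
  have htriv := norm_oscillatoryIntegral_le (γ := γ) hpq.le hgs (fun x hx => (hgG x hx).1) A B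
  rw [← div_eq_mul_inv, le_div_iff₀ (by positivity), mul_add, mul_one]
  gcongr
  rcases eq_or_ne A 0 with rfl | hA
  · simpa using hC.le
  · exact (le_div_iff₀ (by positivity)).1 (hdecay A B hA hBA)

lemma exists_norm_oscillatoryIntegral_le_inv_sqrt (hpq : p < q)
    (hγ : ∀ x ∈ Set.Icc p q, HasDerivAt γ (γ₁ x) x)
    (hγ₁ : ∀ x ∈ Set.Icc p q, HasDerivAt γ₁ (γ₂ x) x) (hγ₂ : ContinuousOn γ₂ (Set.Icc p q))
    (hne : ∀ x ∈ Set.Icc p q, γ₂ x ≠ 0)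
    (hg : ContDiff ℝ 2 g) (hgs : tsupport g ⊆ Set.Ioo p q) :
    ∃ C > 0, ∀ A B : ℝ, B ≠ 0 → ‖oscillatoryIntegral γ g A B‖ ≤ C * (√|B|)⁻¹ := by
  obtain ⟨G, hG, hgG⟩ := exists_bound_deriv2 hg p q
  obtain ⟨d, hd, hdle⟩ := isCompact_Icc.exists_forall_le' hγ₂.abs fun x hx => abs_pos.2 (hne x hx)
  refine ⟨G * (q - p + 2 * π) / √d, ?_, fun A B hB => ?_⟩
  · have := sub_pos.2 hpq
    positivity
  rw [oscillatoryIntegral_eq_intervalIntegral hgs]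
  refine (norm_integral_cexp_mul_le_of_le_abs_deriv2 (m := |B| * d) hpq.le (by positivity)
    (fun x hx => ((hasDerivAt_id x).const_mul A).add ((hγ x hx).const_mul B))
    (fun x hx => ((hγ₁ x hx).const_mul B).const_add (A * 1)) (by fun_prop)
    (fun x _ => (hg.differentiable two_ne_zero x).hasDerivAt)
    (hg.continuous_deriv one_le_two).continuousOn
    (eq_zero_of_tsupport_subset hgs (by simp)) (eq_zero_of_tsupport_subset hgs (by simp))
    (fun x hx => (hgG x hx).1) (fun x hx => (hgG x hx).2.1) fun x hx => ?_).trans_eq ?_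
  · rw [abs_mul]
    exact mul_le_mul_of_nonneg_left (hdle x hx) (abs_nonneg B)
  · rw [Real.sqrt_mul (abs_nonneg B)]
    field_simp

lemma exists_norm_oscillatoryIntegral_le_majorant (hpq : p < q)
    (hγ : ∀ x ∈ Set.Icc p q, HasDerivAt γ (γ₁ x) x)
    (hγ₁ : ∀ x ∈ Set.Icc p q, HasDerivAt γ₁ (γ₂ x) x)
    (hγ₂ : ∀ x ∈ Set.Icc p q, HasDerivAt γ₂ (γ₃ x) x) (hγ₃ : ContinuousOn γ₃ (Set.Icc p q))
    (hne : ∀ x ∈ Set.Icc p q, γ₂ x ≠ 0)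
    (hg : ContDiff ℝ 2 g) (hgs : tsupport g ⊆ Set.Ioo p q) :
    ∃ K > 0, ∃ C > 0, ∀ A B Y : ℝ, A ≠ 0 → K * |B| ≤ Y →
      ‖oscillatoryIntegral γ g A B‖ ≤ C * oscillatoryMajorant Y A := by
  obtain ⟨K, hK, C₁, hC₁, hlarge⟩ :=
    exists_norm_oscillatoryIntegral_le_inv_one_add_sq hpq hγ hγ₁ hγ₂ hγ₃ hg hgs
  obtain ⟨C₂, hC₂, hsmall⟩ := exists_norm_oscillatoryIntegral_le_inv_sqrt hpq hγ hγ₁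
    (HasDerivAt.continuousOn hγ₂) hne hg hgs
  refine ⟨K, hK, C₁ + C₂ * √K, by positivity, fun A B Y hA hY => ?_⟩
  rcases le_or_gt (K * |B|) |A| with hBA | hAB
  · refine (hlarge A B hBA).trans ?_
    gcongr
    · exact le_add_of_nonneg_right (by positivity)
    · exact le_add_of_nonneg_right (Set.indicator_nonneg (fun _ _ => by positivity) A)
  · have hB : B ≠ 0 := by
      rintro rfl
      simp only [abs_zero, mul_zero] at hAB
      exact hAB.not_ge (abs_nonneg A)
    calc ‖oscillatoryIntegral γ g A B‖ ≤ C₂ * (√|B|)⁻¹ := hsmall A B hB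
      _ = C₂ * √K * (√(K * |B|))⁻¹ := by
        rw [Real.sqrt_mul hK.le]
        field_simp
      _ ≤ C₂ * √K * (√|A|)⁻¹ := by gcongr
      _ ≤ (C₁ + C₂ * √K) * oscillatoryMajorant Y A := by
        have hmem : A ∈ Set.Icc (-Y) Y := abs_le.1 (hAB.le.trans hY)
        rw [oscillatoryMajorant, Set.indicator_of_mem hmem]
        gcongr
        · exact le_add_of_nonneg_left hC₁.le
        · exact le_add_of_nonneg_left (by positivity)

end LinearPerturbation

end OscillatoryIntegrals

section OscillatoryTransform

lemma continuous_toLp_of_dominated {X Y E : Type*} [TopologicalSpace X]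
    [FirstCountableTopology X] [MeasurableSpace Y] {μ : Measure Y} [NormedAddCommGroup E]
    {p : ℝ≥0∞} [Fact (1 ≤ p)] (hp : p ≠ ∞) {F : X → Y → E} {bound : Y → ℝ}
    (hF : ∀ x, MemLp (F x) p μ) (hbound : MemLp bound p μ) (hle : ∀ x y, ‖F x y‖ ≤ bound y)
    (hcont : ∀ y, Continuous fun x => F x y) : Continuous fun x => (hF x).toLp (F x) := by
  have hp0 : p ≠ 0 := (zero_lt_one.trans_le Fact.out).ne'
  have hp' : 0 < p.toReal := ENNReal.toReal_pos hp0 hp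
  refine continuous_iff_continuousAt.2 fun x₀ =>
    (Lp.tendsto_Lp_iff_tendsto_eLpNorm'' F hF (F x₀) (hF x₀)).2 ?_
  have hlim : Filter.Tendsto (fun x => ∫⁻ y, ‖F x y - F x₀ y‖ₑ ^ p.toReal ∂μ) (𝓝 x₀)
      (𝓝 (∫⁻ _, 0 ∂μ)) := by
    refine tendsto_lintegral_filter_of_dominated_convergence'
      (fun y => ‖2 * bound y‖ₑ ^ p.toReal) (.of_forall fun x =>
        ((hF x).sub (hF x₀)).aestronglyMeasurable.enorm.pow_const _)
      (.of_forall fun x => .of_forall fun y => ?_)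
      (lintegral_rpow_enorm_lt_top_of_eLpNorm_lt_top hp0 hp
        (hbound.const_mul 2).eLpNorm_lt_top).ne (.of_forall fun y => ?_)
    · refine ENNReal.rpow_le_rpow (enorm_le_iff_norm_le.2 ?_) hp'.le
      refine (norm_sub_le _ _).trans (le_trans ?_ (le_abs_self _))
      linarith [hle x y, hle x₀ y]
    · have hdiff : Continuous fun x => F x y - F x₀ y := (hcont y).sub continuous_const
      simpa [hp'] using (hdiff.enorm.tendsto x₀).ennrpow_const p.toReal
  rw [lintegral_zero] at hlim
  simpa [eLpNorm_eq_lintegral_rpow_enorm_toReal hp0 hp, hp'] using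
    hlim.ennrpow_const (1 / p.toReal)

/-- The oscillatory transform `f ↦ ∫ exp (i (A ρ + B γ ρ)) w ρ f ρ dρ`, a function of the
frequencies `A` and `B`; the maximal operator of the theorem samples it along `A = ε r`,
`B = t r`. -/
def oscillatoryTransform (γ w : ℝ → ℝ) (f : ℝ → ℂ) (A B : ℝ) : ℂ :=
  ∫ ρ, Complex.exp (Complex.I * ↑(A * ρ + B * γ ρ)) * w ρ * f ρ

/-- The wave `exp (-i (A ρ + B γ ρ)) w ρ` whose inner product with `f` is
`oscillatoryTransform γ w f A B`; hence the minus sign. -/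
def oscillatoryWave (γ w : ℝ → ℝ) (A B ρ : ℝ) : ℂ :=
  Complex.exp (Complex.I * ↑(-(A * ρ + B * γ ρ))) * w ρ

variable {γ w : ℝ → ℝ} {f : ℝ → ℂ}

lemma memLp_oscillatoryWave {p : ℝ≥0∞} (hγ : Measurable γ) (hw : MemLp w p) (A B : ℝ) :
    MemLp (oscillatoryWave γ w A B) p := by
  have hwm := hw.aestronglyMeasurable.aemeasurable
  refine hw.of_le (AEMeasurable.aestronglyMeasurable ?_) (.of_forall fun ρ =>
    (norm_cexp_I_mul_ofReal_mul_ofReal _ _).le)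
  unfold oscillatoryWave
  fun_prop

lemma continuous_toLp_oscillatoryWave {p : ℝ≥0∞} [Fact (1 ≤ p)] (hp : p ≠ ∞) (hγ : Measurable γ)
    (hw : MemLp w p) :
    Continuous fun x : ℝ × ℝ => (memLp_oscillatoryWave hγ hw x.1 x.2).toLp := by
  refine continuous_toLp_of_dominated hp _ hw.abs
    (fun x ρ => (norm_cexp_I_mul_ofReal_mul_ofReal _ _).le) fun ρ => ?_
  unfold oscillatoryWave
  fun_prop

lemma inner_toLp_oscillatoryWave (hγ : Measurable γ) (hw : MemLp w 2) (hf : MemLp f 2)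
    (A B : ℝ) :
    ⟪(memLp_oscillatoryWave hγ hw A B).toLp, hf.toLp⟫_ℂ = oscillatoryTransform γ w f A B := by
  rw [L2.inner_def]
  refine integral_congr_ae ?_
  filter_upwards [(memLp_oscillatoryWave hγ hw A B).coeFn_toLp, hf.coeFn_toLp] with ρ he hf
  rw [he, hf, RCLike.inner_apply, mul_comm, oscillatoryWave, map_mul, ← Complex.exp_conj]
  simp only [map_mul, Complex.conj_I, Complex.conj_ofReal, Complex.ofReal_neg, map_neg,
    neg_mul_neg]

lemma oscillatoryTransform_oscillatoryWave (A B A' B' : ℝ) :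
    oscillatoryTransform γ w (oscillatoryWave γ w A' B') A B =
      oscillatoryIntegral γ (fun ρ => w ρ ^ 2) (A - A') (B - B') := by
  refine integral_congr_ae (.of_forall fun ρ => ?_)
  have hexp : Complex.exp (Complex.I * ↑((A - A') * ρ + (B - B') * γ ρ)) =
      Complex.exp (Complex.I * ↑(A * ρ + B * γ ρ)) *
        Complex.exp (Complex.I * ↑(-(A' * ρ + B' * γ ρ))) := by
    rw [← Complex.exp_add]
    push_cast
    ring_nf
  simp only [oscillatoryWave, hexp]
  push_cast
  ring

lemma measurable_oscillatoryTransform {X : Type*} [MeasurableSpace X] {α β : X → ℝ}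
    (hα : Measurable α) (hβ : Measurable β) (hγ : Measurable γ) (hw : MemLp w 2)
    (hf : MemLp f 2) : Measurable fun x => oscillatoryTransform γ w f (α x) (β x) := by
  have hpair : Measurable fun x : ℝ × ℝ => oscillatoryTransform γ w f x.1 x.2 := by
    simp only [← inner_toLp_oscillatoryWave hγ hw hf]
    exact ((continuous_toLp_oscillatoryWave ENNReal.ofNat_ne_top hγ hw).inner
      continuous_const).measurable
  simpa only [Function.comp_def] using hpair.comp (hα.prodMk hβ)

lemma eLpNorm_oscillatoryTransform_sq_le {X : Type*} [MeasurableSpace X] {μ : Measure X}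
    [SigmaFinite μ] {M : ℝ≥0∞} {α β : X → ℝ} (hα : Measurable α) (hβ : Measurable β)
    (hγ : Measurable γ) (hw : MemLp w 2)
    (hM : ∀ x, ∫⁻ y, ‖oscillatoryIntegral γ (fun ρ => w ρ ^ 2) (α x - α y) (β x - β y)‖ₑ ∂μ ≤ M)
    (hf : MemLp f 2) :
    eLpNorm (fun x => oscillatoryTransform γ w f (α x) (β x)) 2 μ ^ 2 ≤
      M * eLpNorm f 2 volume ^ 2 := by
  have hcont := continuous_toLp_oscillatoryWave ENNReal.ofNat_ne_top hγ hw
  rw [← lintegral_enorm_sq, ← Lp.enorm_toLp hf]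
  simp only [← inner_toLp_oscillatoryWave hγ hw hf]
  refine lintegral_enorm_inner_sq_le
    (hcont.stronglyMeasurable.comp_measurable (hα.prodMk hβ)) (fun x => ?_) _
  simpa only [Function.comp_apply, oscillatoryTransform_oscillatoryWave,
    inner_toLp_oscillatoryWave hγ hw (memLp_oscillatoryWave hγ hw _ _)] using hM x

lemma setIntegral_eq_oscillatoryTransform_indicator {S : Set ℝ} (hS : MeasurableSet S)
    (γ w : ℝ → ℝ) (f : ℝ → ℂ) (A B : ℝ) :
    ∫ ρ in S, Complex.exp (Complex.I * ↑(A * ρ + B * γ ρ)) * w ρ * f ρ =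
      oscillatoryTransform γ (S.indicator w) (S.indicator f) A B := by
  rw [← integral_indicator hS]
  refine integral_congr_ae (.of_forall fun ρ => ?_)
  by_cases hρ : ρ ∈ S <;> simp [hρ]

lemma integrable_oscillatoryTransform (hγ : Measurable γ)
    (hwf : Integrable fun ρ => (w ρ : ℂ) * f ρ) (A B : ℝ) :
    Integrable fun ρ => Complex.exp (Complex.I * ↑(A * ρ + B * γ ρ)) * w ρ * f ρ := by
  simp only [mul_assoc]
  refine hwf.bdd_mul (c := 1) (Measurable.aestronglyMeasurable (by fun_prop))
    (.of_forall fun ρ => (Complex.norm_exp_I_mul_ofReal _).le)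

lemma oscillatoryTransform_sum (hγ : Measurable γ) {ι : Type*} (S : Finset ι) (c : ι → ℝ)
    {v : ι → ℝ → ℝ} (hv : ∀ j, Integrable fun ρ => (v j ρ : ℂ) * f ρ) (A B : ℝ) :
    oscillatoryTransform γ (fun ρ => ∑ j ∈ S, c j * v j ρ) f A B =
      ∑ j ∈ S, c j • oscillatoryTransform γ (v j) f A B := by
  simp only [oscillatoryTransform, ← integral_smul]
  rw [← integral_finsetSum S fun j _ =>
    (integrable_oscillatoryTransform hγ (hv j) A B).fun_smul (c j)]
  refine integral_congr_ae (.of_forall fun ρ => ?_)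
  simp only [Complex.ofReal_sum, Complex.ofReal_mul, Finset.mul_sum, Finset.sum_mul,
    Complex.real_smul]
  exact Finset.sum_congr rfl fun j _ => by ring

variable {X : Type*} [MeasurableSpace X] {μ : Measure X} {α β : X → ℝ}

lemma eLpNorm_oscillatoryTransform_sum_le (hγ : Measurable γ) (hα : Measurable α)
    (hβ : Measurable β) {ι : Type*} (S : Finset ι) (c : ι → ℝ) {v : ι → ℝ → ℝ}
    (hv : ∀ j, MemLp (v j) 2) (hf : MemLp f 2) :
    eLpNorm (fun x => oscillatoryTransform γ (fun ρ => ∑ j ∈ S, c j * v j ρ) f (α x) (β x)) 2 μ ≤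
      ∑ j ∈ S, ‖c j‖ₑ * eLpNorm (fun x => oscillatoryTransform γ (v j) f (α x) (β x)) 2 μ := by
  have hvf : ∀ j, Integrable fun ρ => (v j ρ : ℂ) * f ρ := fun j =>
    MemLp.integrable_mul (f := fun ρ => (v j ρ : ℂ)) (hv j).ofReal hf
  have hsum : (fun x => oscillatoryTransform γ (fun ρ => ∑ j ∈ S, c j * v j ρ) f (α x) (β x)) =
      ∑ j ∈ S, c j • fun x => oscillatoryTransform γ (v j) f (α x) (β x) := by
    ext x
    rw [oscillatoryTransform_sum hγ S c hvf, Finset.sum_apply]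
    simp only [Pi.smul_apply]
  rw [hsum]
  exact (eLpNorm_sum_le (fun j _ =>
    ((measurable_oscillatoryTransform hα hβ hγ (hv j) hf).const_smul (c j)).aestronglyMeasurable)
    one_le_two).trans_eq (Finset.sum_congr rfl fun j _ => eLpNorm_const_smul _ _ _ _)

lemma eLpNorm_oscillatoryTransform_le_of_tendsto (hγ : Measurable γ) (hα : Measurable α)
    (hβ : Measurable β) {v : ℕ → ℝ → ℝ} (hv : ∀ n, MemLp (v n) 2) {D : ℝ}
    (hD : ∀ n ρ, |v n ρ| ≤ D)
    (hlim : ∀ ρ, Filter.Tendsto (fun n => v n ρ) Filter.atTop (𝓝 (w ρ)))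
    (hf1 : Integrable f) (hf2 : MemLp f 2) {M : ℝ≥0∞}
    (hM : ∀ n, eLpNorm (fun x => oscillatoryTransform γ (v n) f (α x) (β x)) 2 μ ≤ M) :
    eLpNorm (fun x => oscillatoryTransform γ w f (α x) (β x)) 2 μ ≤ M := by
  have hconv : ∀ A B, Filter.Tendsto (fun n => oscillatoryTransform γ (v n) f A B) Filter.atTop
      (𝓝 (oscillatoryTransform γ w f A B)) := fun A B => by
    refine tendsto_integral_of_dominated_convergence (fun ρ => D * ‖f ρ‖)
      (fun n => (integrable_oscillatoryTransform hγ
        ((hv n).ofReal.integrable_mul hf2) A B).aestronglyMeasurable)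
      (hf1.norm.const_mul D) (fun n => .of_forall fun ρ => ?_) (.of_forall fun ρ => ?_)
    · rw [norm_mul, norm_cexp_I_mul_ofReal_mul_ofReal]
      gcongr
      exact hD n ρ
    · exact (((Complex.continuous_ofReal.tendsto _).comp (hlim ρ)).const_mul _).mul_const _
  refine (Lp.eLpNorm_lim_le_liminf_eLpNorm (fun n => (measurable_oscillatoryTransform hα hβ hγ
    (hv n) hf2).aestronglyMeasurable) _ (.of_forall fun x => hconv _ _)).trans ?_
  exact Filter.liminf_le_of_le (by isBoundedDefault) fun b hb =>
    let ⟨n, hn⟩ := hb.exists; hn.trans (hM n)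

end OscillatoryTransform

section PowerPhase

variable {a p q l : ℝ} {g : ℝ → ℝ}

lemma exists_norm_oscillatoryIntegral_rpow_le_majorant (ha : a ≠ 0) (ha1 : a ≠ 1) (hp : 0 < p)
    (hpq : p < q) (hg : ContDiff ℝ 2 g) (hgs : tsupport g ⊆ Set.Ioo p q) :
    ∃ K > 0, ∃ C > 0, ∀ A B Y : ℝ, A ≠ 0 → K * |B| ≤ Y →
      ‖oscillatoryIntegral (fun x => x ^ a) g A B‖ ≤ C * oscillatoryMajorant Y A := by
  have hne : ∀ x ∈ Set.Icc p q, x ≠ 0 := fun x hx => (hp.trans_le hx.1).ne'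
  have hrpow : ∀ b, ∀ x ∈ Set.Icc p q, HasDerivAt (fun x => x ^ b) (b * x ^ (b - 1)) x :=
    fun b x hx => hasDerivAt_rpow_const (.inl (hne x hx))
  refine exists_norm_oscillatoryIntegral_le_majorant hpq (hrpow a)
    (fun x hx => (hrpow (a - 1) x hx).const_mul a)
    (fun x hx => ((hrpow (a - 1 - 1) x hx).const_mul (a - 1)).const_mul a) ?_ (fun x hx => ?_)
    hg hgs
  · have := HasDerivAt.continuousOn (hrpow (a - 1 - 1 - 1))
    fun_prop
  · exact mul_ne_zero ha
      (mul_ne_zero (sub_ne_zero.2 ha1) (rpow_pos_of_pos (hp.trans_le hx.1) _).ne')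

lemma oscillatoryIntegral_rpow_comp_div (hl : 0 < l) (hg : ∀ x ≤ 0, g x = 0) (A B : ℝ) :
    oscillatoryIntegral (fun x => x ^ a) (fun x => g (x / l)) A B =
      l * oscillatoryIntegral (fun x => x ^ a) g (l * A) (l ^ a * B) := by
  have hscale := Measure.integral_comp_div
    (fun x => Complex.exp (Complex.I * ↑(A * (l * x) + B * (l * x) ^ a)) * g x) l
  rw [abs_of_pos hl, Complex.real_smul] at hscale
  simp only [mul_div_cancel₀ _ hl.ne'] at hscale
  refine hscale.trans (congrArg _ (integral_congr_ae (.of_forall fun x => ?_)))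
  rcases le_or_gt x 0 with hx | hx
  · simp [hg x hx]
  · simp only [mul_rpow hl.le hx.le]
    ring_nf

lemma lintegral_comp_mul_left {F : ℝ → ℝ≥0∞} (hF : Measurable F) {c : ℝ} (hc : c ≠ 0) :
    ∫⁻ x, F (c * x) = ENNReal.ofReal |c⁻¹| * ∫⁻ x, F x := by
  rw [← lintegral_map hF (measurable_const_mul c), Real.map_volume_mul_left hc,
    lintegral_smul_measure, smul_eq_mul]

lemma lintegral_oscillatoryMajorant_comp_mul_sub {Y c : ℝ} (hY : 0 < Y) (hc : c ≠ 0) (x : ℝ) :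
    ∫⁻ y, ENNReal.ofReal (oscillatoryMajorant Y (c * (x - y))) =
      ENNReal.ofReal (|c⁻¹| * (π + 4 * √Y)) := by
  rw [lintegral_sub_left_eq_self fun y => ENNReal.ofReal (oscillatoryMajorant Y (c * y)),
    lintegral_comp_mul_left (measurable_oscillatoryMajorant Y).ennreal_ofReal hc,
    lintegral_oscillatoryMajorant hY, ENNReal.ofReal_mul (abs_nonneg _)]

lemma exists_norm_oscillatoryIntegral_rpow_comp_div_le (ha : a ≠ 0) (ha1 : a ≠ 1)
    (hp : 0 < p) (hpq : p < q) (hg : ContDiff ℝ 2 g) (hgs : tsupport g ⊆ Set.Ioo p q) :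
    ∃ K > 0, ∃ C > 0, ∀ l > 0, ∀ A B Y : ℝ, A ≠ 0 → K * (l ^ a * |B|) ≤ Y →
      ‖oscillatoryIntegral (fun ρ => ρ ^ a) (fun ρ => g (ρ / l)) A B‖ ≤
        l * C * oscillatoryMajorant Y (l * A) := by
  obtain ⟨K, hK, C, hC, hosc⟩ :=
    exists_norm_oscillatoryIntegral_rpow_le_majorant ha ha1 hp hpq hg hgs
  have hg0 : ∀ ρ ≤ 0, g ρ = 0 := fun ρ hρ =>
    eq_zero_of_tsupport_subset hgs fun h => hρ.not_gt (hp.trans h.1)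
  refine ⟨K, hK, C, hC, fun l hl A B Y hA hY => ?_⟩
  rw [oscillatoryIntegral_rpow_comp_div hl hg0, norm_mul, Complex.norm_of_nonneg hl.le, mul_assoc]
  gcongr
  refine hosc _ _ _ (mul_ne_zero hl.ne' hA) ?_
  rwa [abs_mul, abs_of_pos (rpow_pos_of_pos hl a)]

lemma exists_lintegral_oscillatoryIntegral_rpow_comp_div_le (ha : a ≠ 0) (ha1 : a ≠ 1)
    (hp : 0 < p) (hpq : p < q) (hg : ContDiff ℝ 2 g) (hgs : tsupport g ⊆ Set.Ioo p q) :
    ∃ M > 0, ∀ l ≥ 1, ∀ ε : ℝ, |ε| = 1 → ∀ β : ℝ → ℝ, (∀ y, |β y| ≤ 2) → ∀ x,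
      ∫⁻ y, ‖oscillatoryIntegral (fun ρ => ρ ^ a) (fun ρ => g (ρ / l)) (ε * x - ε * y) (β y)‖ₑ ≤
        ENNReal.ofReal (M * l ^ (max a 0 / 2)) := by
  obtain ⟨K, hK, C, hC, hosc⟩ :=
    exists_norm_oscillatoryIntegral_rpow_comp_div_le ha ha1 hp hpq hg hgs
  refine ⟨C * (π + 4 * √(2 * K)), by positivity, fun l hl ε hε β hβ x => ?_⟩
  have hl0 : 0 < l := one_pos.trans_le hl
  have hε0 : ε ≠ 0 := abs_ne_zero.1 (hε ▸ one_ne_zero)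
  set Y := 2 * K * l ^ max a 0 with hY
  have hKY : ∀ y, K * (l ^ a * |β y|) ≤ Y := fun y =>
    calc K * (l ^ a * |β y|) ≤ K * (l ^ max a 0 * 2) := by
          gcongr
          exacts [le_max_left a 0, hβ y]
      _ = Y := by ring
  calc ∫⁻ y, ‖oscillatoryIntegral (fun ρ => ρ ^ a) (fun ρ => g (ρ / l)) (ε * x - ε * y) (β y)‖ₑ
      ≤ ∫⁻ y, ENNReal.ofReal (l * C) *
          ENNReal.ofReal (oscillatoryMajorant Y (l * ε * (x - y))) := by
        refine lintegral_mono_ae ((Measure.ae_ne volume x).mono fun y hy => ?_)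
        rw [← ENNReal.ofReal_mul (by positivity), ← ofReal_norm, mul_assoc l ε, mul_sub]
        refine ENNReal.ofReal_le_ofReal (hosc l hl0 _ _ _ ?_ (hKY y))
        rw [← mul_sub]
        exact mul_ne_zero hε0 (sub_ne_zero.2 hy.symm)
    _ = ENNReal.ofReal (C * (π + 4 * √Y)) := by
        rw [lintegral_const_mul' _ _ ENNReal.ofReal_ne_top,
          lintegral_oscillatoryMajorant_comp_mul_sub (by positivity) (mul_ne_zero hl0.ne' hε0),
          ← ENNReal.ofReal_mul (by positivity), abs_inv, abs_mul, hε, abs_of_pos hl0]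
        field_simp
    _ ≤ ENNReal.ofReal (C * (π + 4 * √(2 * K)) * l ^ (max a 0 / 2)) := by
        have hroot : √Y = √(2 * K) * l ^ (max a 0 / 2) := by
          rw [hY, Real.sqrt_mul (by positivity), Real.sqrt_eq_rpow (l ^ max a 0),
            ← rpow_mul hl0.le, mul_one_div]
        have hone : 1 ≤ l ^ (max a 0 / 2) := one_le_rpow hl (by positivity)
        rw [hroot, mul_assoc C, add_mul, ← mul_assoc 4]
        gcongr
        exact le_mul_of_one_le_right pi_nonneg hone

lemma memLp_comp_div {r : ℝ≥0∞} (hg : Continuous g) (hgc : HasCompactSupport g) (hl : l ≠ 0) :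
    MemLp (fun ρ => g (ρ / l)) r := by
  refine (hg.comp (continuous_id.div_const l)).memLp_of_hasCompactSupport ?_
  simpa only [div_eq_mul_inv, Function.comp_def, id, Homeomorph.coe_mulRight₀] using
    hgc.comp_homeomorph (Homeomorph.mulRight₀ l⁻¹ (inv_ne_zero hl))

lemma exists_eLpNorm_oscillatoryTransform_rpow_comp_div_le (ha : a ≠ 0) (ha1 : a ≠ 1)
    (hp : 0 < p) (hpq : p < q) (hg : ContDiff ℝ 2 g) (hgs : tsupport g ⊆ Set.Ioo p q) :
    ∃ M > 0, ∀ l ≥ 1, ∀ ε : ℝ, |ε| = 1 → ∀ t : ℝ → ℝ, Measurable t → (∀ r, |t r| ≤ 1) →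
      ∀ f : ℝ → ℂ, MemLp f 2 →
      eLpNorm (fun r => oscillatoryTransform (fun ρ => ρ ^ a) (fun ρ => g (ρ / l)) f (ε * r) (t r))
        2 volume ≤ ENNReal.ofReal (M * l ^ (max a 0 / 4)) * eLpNorm f 2 volume := by
  have hgs2 : tsupport (fun ρ => g ρ ^ 2) ⊆ Set.Ioo p q :=
    (closure_mono fun ρ hρ => by simpa using hρ).trans hgs
  obtain ⟨M, hM, hkernel⟩ :=
    exists_lintegral_oscillatoryIntegral_rpow_comp_div_le ha ha1 hp hpq (hg.pow 2) hgs2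
  refine ⟨√M, by positivity, fun l hl ε hε t ht htr f hf => ?_⟩
  have hl0 : 0 < l := one_pos.trans_le hl
  have hgc : HasCompactSupport g := isCompact_Icc.of_isClosed_subset (isClosed_tsupport g)
    (hgs.trans Set.Ioo_subset_Icc_self)
  have hw : MemLp (fun ρ => g (ρ / l)) 2 := memLp_comp_div hg.continuous hgc hl0.ne'
  have hsub : ∀ x y, |t x - t y| ≤ 2 := fun x y =>
    (abs_sub _ _).trans ((add_le_add (htr x) (htr y)).trans_eq one_add_one_eq_two)
  refine (ENNReal.pow_le_pow_left_iff two_ne_zero).1 ?_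
  refine (eLpNorm_oscillatoryTransform_sq_le (measurable_const_mul ε) ht (by fun_prop) hw
    (fun x => hkernel l hl ε hε (fun y => t x - t y) (hsub x) x) hf).trans_eq ?_
  rw [mul_pow, ← ENNReal.ofReal_pow (by positivity), mul_pow, Real.sq_sqrt hM.le,
    ← rpow_mul_natCast hl0.le]
  ring_nf

end PowerPhase

section DyadicDecomposition

variable {a s : ℝ} {χ : ℝ → ℝ}

/-- The profile `u ^ (-s) (χ (u / 2) - χ u)` of the dyadic pieces of `ρ ^ (-s) (1 - χ ρ)`. It is
cut off at `0` because `u ^ (-s)` takes junk values for `u < 0`. -/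
def dyadicBump (s : ℝ) (χ : ℝ → ℝ) : ℝ → ℝ :=
  (Set.Ioi 0).indicator fun u => u ^ (-s) * (χ (u / 2) - χ u)

lemma dyadicBump_eq_zero (hχ0 : ∀ x ∉ Set.Ioo (-2) 2, χ x = 0)
    (hχ1 : ∀ x ∈ Set.Icc (-1) 1, χ x = 1) {u : ℝ} (hu : u ∉ Set.Icc 1 4) :
    dyadicBump s χ u = 0 := by
  rw [dyadicBump, Set.indicator_apply_eq_zero]
  intro (hu0 : 0 < u)
  have hflat : χ (u / 2) = χ u := by
    rcases lt_or_ge u 1 with hu1 | hu1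
    · rw [hχ1 u ⟨by linarith, hu1.le⟩, hχ1 (u / 2) ⟨by linarith, by linarith⟩]
    · have hu4 : 4 < u := not_le.1 fun h => hu ⟨hu1, h⟩
      rw [hχ0 u fun h => by linarith [h.2], hχ0 (u / 2) fun h => by linarith [h.2]]
  rw [hflat, sub_self, mul_zero]

lemma tsupport_dyadicBump_subset (hχ0 : ∀ x ∉ Set.Ioo (-2) 2, χ x = 0)
    (hχ1 : ∀ x ∈ Set.Icc (-1) 1, χ x = 1) : tsupport (dyadicBump s χ) ⊆ Set.Icc 1 4 :=
  closure_minimal (Function.support_subset_iff'.2 fun _ => dyadicBump_eq_zero hχ0 hχ1)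
    isClosed_Icc

lemma contDiff_dyadicBump {n : WithTop ℕ∞} (hχ : ContDiff ℝ n χ)
    (hχ0 : ∀ x ∉ Set.Ioo (-2) 2, χ x = 0) (hχ1 : ∀ x ∈ Set.Icc (-1) 1, χ x = 1) :
    ContDiff ℝ n (dyadicBump s χ) := by
  refine contDiff_iff_contDiffAt.2 fun u => ?_
  rcases lt_or_ge u 1 with hu | hu
  · refine (contDiffAt_const (c := 0)).congr_of_eventuallyEq ?_
    filter_upwards [Iio_mem_nhds hu] with x hx
    exact dyadicBump_eq_zero hχ0 hχ1 fun h => hx.not_ge h.1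
  · have hu0 : 0 < u := one_pos.trans_le hu
    have hsmooth : ContDiffAt ℝ n (fun u => u ^ (-s) * (χ (u / 2) - χ u)) u :=
      (contDiffAt_rpow_const_of_ne hu0.ne').mul
        ((hχ.comp (contDiff_id.div_const 2)).sub hχ).contDiffAt
    refine hsmooth.congr_of_eventuallyEq ?_
    filter_upwards [Ioi_mem_nhds hu0] with x hx using Set.indicator_of_mem hx _

lemma sum_range_dyadicBump (s : ℝ) (χ : ℝ → ℝ) (n : ℕ) (ρ : ℝ) :
    ∑ j ∈ Finset.range n, ((2 : ℝ) ^ j) ^ (-s) * dyadicBump s χ (ρ / 2 ^ j) =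
      (Set.Ioi 0).indicator (fun ρ => ρ ^ (-s) * (χ (ρ / 2 ^ n) - χ ρ)) ρ := by
  rcases le_or_gt ρ 0 with hρ | hρ
  · rw [Set.indicator_of_notMem (Set.notMem_Ioi.2 hρ)]
    refine Finset.sum_eq_zero fun j _ => mul_eq_zero_of_right _ (Set.indicator_of_notMem ?_ _)
    exact (div_nonpos_of_nonpos_of_nonneg hρ (by positivity)).not_gt
  · have hterm : ∀ j : ℕ, ((2 : ℝ) ^ j) ^ (-s) * dyadicBump s χ (ρ / 2 ^ j) =
        ρ ^ (-s) * (χ (ρ / 2 ^ (j + 1)) - χ (ρ / 2 ^ j)) := fun j => by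
      rw [dyadicBump, Set.indicator_of_mem (Set.mem_Ioi.2 (by positivity)), ← mul_assoc,
        ← mul_rpow (by positivity) (by positivity), mul_div_cancel₀ _ (by positivity), div_div,
        ← pow_succ]
    rw [Set.indicator_of_mem (Set.mem_Ioi.2 hρ), Finset.sum_congr rfl fun j _ => hterm j,
      ← Finset.mul_sum, Finset.sum_range_sub fun j => χ (ρ / 2 ^ j), pow_zero, div_one]

lemma tendsto_sum_range_dyadicBump (s : ℝ) (hχ1 : ∀ x ∈ Set.Icc (-1) 1, χ x = 1) (ρ : ℝ) :
    Filter.Tendsto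
      (fun n => ∑ j ∈ Finset.range n, ((2 : ℝ) ^ j) ^ (-s) * dyadicBump s χ (ρ / 2 ^ j))
      Filter.atTop (𝓝 ((Set.Ioi 0).indicator (fun ρ => ρ ^ (-s) * (1 - χ ρ)) ρ)) := by
  have hsmall : Filter.Tendsto (fun n : ℕ => ρ / 2 ^ n) Filter.atTop (𝓝 0) :=
    tendsto_const_nhds.div_atTop (tendsto_pow_atTop_atTop_of_one_lt one_lt_two)
  refine tendsto_const_nhds.congr' ?_
  filter_upwards [hsmall.eventually (Icc_mem_nhds neg_one_lt_zero one_pos)] with n hn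
  simp only [sum_range_dyadicBump, Set.indicator_apply, hχ1 _ hn]

lemma exists_abs_sum_range_dyadicBump_le (hs : 0 ≤ s) (hχ : Continuous χ)
    (hχ0 : ∀ x ∉ Set.Ioo (-2) 2, χ x = 0) (hχ1 : ∀ x ∈ Set.Icc (-1) 1, χ x = 1) :
    ∃ D, ∀ n ρ,
      |∑ j ∈ Finset.range n, ((2 : ℝ) ^ j) ^ (-s) * dyadicBump s χ (ρ / 2 ^ j)| ≤ D := by
  obtain ⟨D, hD⟩ := hχ.bounded_above_of_compact_support
    (HasCompactSupport.intro isCompact_Icc fun x hx =>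
      hχ0 x fun h => hx (Set.Ioo_subset_Icc_self h))
  have hD0 : 0 ≤ D := (norm_nonneg _).trans (hD 0)
  refine ⟨D + D, fun n ρ => ?_⟩
  rw [sum_range_dyadicBump]
  rcases le_or_gt ρ 0 with hρ | hρ
  · rw [Set.indicator_of_notMem (Set.notMem_Ioi.2 hρ), abs_zero]
    positivity
  rw [Set.indicator_of_mem (Set.mem_Ioi.2 hρ)]
  rcases le_or_gt ρ 1 with hρ1 | hρ1
  · have hle : ρ / 2 ^ n ≤ 1 := (div_le_self hρ.le (one_le_pow₀ one_le_two)).trans hρ1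
    have hnn : 0 ≤ ρ / 2 ^ n := by positivity
    rw [hχ1 ρ ⟨by linarith, hρ1⟩, hχ1 _ ⟨by linarith, hle⟩, sub_self, mul_zero, abs_zero]
    positivity
  · rw [abs_mul, abs_of_pos (rpow_pos_of_pos hρ _)]
    exact (mul_le_of_le_one_left (abs_nonneg _)
      (rpow_le_one_of_one_le_of_nonpos hρ1.le (neg_nonpos.2 hs))).trans
      ((norm_sub_le _ _).trans (add_le_add (hD _) (hD _)))

lemma memLp_dyadicBump_comp_div {p : ℝ≥0∞} (hχ : Continuous χ)
    (hχ0 : ∀ x ∉ Set.Ioo (-2) 2, χ x = 0) (hχ1 : ∀ x ∈ Set.Icc (-1) 1, χ x = 1) (j : ℕ) :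
    MemLp (fun ρ => dyadicBump s χ (ρ / 2 ^ j)) p :=
  memLp_comp_div (contDiff_zero.1 (contDiff_dyadicBump (contDiff_zero.2 hχ) hχ0 hχ1))
    (isCompact_Icc.of_isClosed_subset (isClosed_tsupport _) (tsupport_dyadicBump_subset hχ0 hχ1))
    (pow_ne_zero j two_ne_zero)

lemma exists_eLpNorm_oscillatoryTransform_sum_dyadicBump_le (ha : a ≠ 0) (ha1 : a ≠ 1)
    (hs : max a 0 / 4 < s) (hχ : ContDiff ℝ 2 χ) (hχ0 : ∀ x ∉ Set.Ioo (-2) 2, χ x = 0)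
    (hχ1 : ∀ x ∈ Set.Icc (-1) 1, χ x = 1) :
    ∃ C > 0, ∀ n : ℕ, ∀ ε : ℝ, |ε| = 1 → ∀ t : ℝ → ℝ, Measurable t → (∀ r, |t r| ≤ 1) →
      ∀ f : ℝ → ℂ, MemLp f 2 →
      eLpNorm (fun r => oscillatoryTransform (fun ρ => ρ ^ a) (fun ρ => ∑ j ∈ Finset.range n,
        ((2 : ℝ) ^ j) ^ (-s) * dyadicBump s χ (ρ / 2 ^ j)) f (ε * r) (t r)) 2 volume ≤
          ENNReal.ofReal C * eLpNorm f 2 volume := by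
  obtain ⟨M, hM, hpiece⟩ := exists_eLpNorm_oscillatoryTransform_rpow_comp_div_le ha ha1
    (by norm_num : (0 : ℝ) < 1 / 2) (by norm_num : (1 : ℝ) / 2 < 5)
    (contDiff_dyadicBump (s := s) hχ hχ0 hχ1)
    ((tsupport_dyadicBump_subset hχ0 hχ1).trans
      (Set.Icc_subset_Ioo (by norm_num) (by norm_num)))
  set q : ℝ := 2 ^ (max a 0 / 4 - s)
  have hq0 : 0 < q := by positivity
  have hq1 : q < 1 := rpow_lt_one_of_one_lt_of_neg one_lt_two (sub_neg.2 hs)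
  have hterm : ∀ j : ℕ, ((2 : ℝ) ^ j) ^ (-s) * (M * ((2 : ℝ) ^ j) ^ (max a 0 / 4)) = M * q ^ j :=
    fun j => by
      rw [rpow_pow_comm two_pos.le, mul_left_comm, ← rpow_add (by positivity), neg_add_eq_sub]
  refine ⟨M * (1 - q)⁻¹, mul_pos hM (inv_pos.2 (sub_pos.2 hq1)), fun n ε hε t ht htr f hf => ?_⟩
  refine (eLpNorm_oscillatoryTransform_sum_le (by fun_prop) (measurable_const_mul ε) ht _ _
    (memLp_dyadicBump_comp_div hχ.continuous hχ0 hχ1) hf).trans ?_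
  calc ∑ j ∈ Finset.range n, ‖((2 : ℝ) ^ j) ^ (-s)‖ₑ * eLpNorm (fun r => oscillatoryTransform
        (fun ρ => ρ ^ a) (fun ρ => dyadicBump s χ (ρ / 2 ^ j)) f (ε * r) (t r)) 2 volume
      ≤ ∑ j ∈ Finset.range n, ENNReal.ofReal (M * q ^ j) * eLpNorm f 2 volume := by
        refine Finset.sum_le_sum fun j _ => ?_
        rw [Real.enorm_of_nonneg (by positivity), ← hterm, ENNReal.ofReal_mul (by positivity),
          mul_assoc]
        gcongr
        exact hpiece _ (one_le_pow₀ one_le_two) ε hε t ht htr f hf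
    _ = ENNReal.ofReal (M * ∑ j ∈ Finset.range n, q ^ j) * eLpNorm f 2 volume := by
        rw [← Finset.sum_mul, ← ENNReal.ofReal_sum_of_nonneg fun j _ => by positivity,
          ← Finset.mul_sum]
    _ ≤ ENNReal.ofReal (M * (1 - q)⁻¹) * eLpNorm f 2 volume := by
        gcongr
        exact sum_le_hasSum _ (fun j _ => by positivity) (hasSum_geometric_of_lt_one hq0.le hq1)

lemma exists_eLpNorm_oscillatoryTransform_rpow_le (ha : a ≠ 0) (ha1 : a ≠ 1)
    (hs : max a 0 / 4 < s) (hχ : ContDiff ℝ 2 χ) (hχ0 : ∀ x ∉ Set.Ioo (-2) 2, χ x = 0)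
    (hχ1 : ∀ x ∈ Set.Icc (-1) 1, χ x = 1) :
    ∃ C > 0, ∀ ε : ℝ, |ε| = 1 → ∀ t : ℝ → ℝ, Measurable t → (∀ r, |t r| ≤ 1) →
      ∀ f : ℝ → ℂ, Integrable f → MemLp f 2 →
      eLpNorm (fun r => oscillatoryTransform (fun ρ => ρ ^ a)
        ((Set.Ioi 0).indicator fun ρ => ρ ^ (-s) * (1 - χ ρ)) f (ε * r) (t r)) 2 volume ≤
          ENNReal.ofReal C * eLpNorm f 2 volume := by
  obtain ⟨C, hC, hsum⟩ :=
    exists_eLpNorm_oscillatoryTransform_sum_dyadicBump_le ha ha1 hs hχ hχ0 hχ1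
  have hs0 : 0 ≤ s := (show 0 ≤ max a 0 / 4 by positivity).trans hs.le
  obtain ⟨D, hD⟩ := exists_abs_sum_range_dyadicBump_le hs0 hχ.continuous hχ0 hχ1
  refine ⟨C, hC, fun ε hε t ht htr f hf1 hf2 => ?_⟩
  exact eLpNorm_oscillatoryTransform_le_of_tendsto (by fun_prop) (measurable_const_mul ε) ht
    (fun n => memLp_finsetSum _ fun j _ =>
      (memLp_dyadicBump_comp_div hχ.continuous hχ0 hχ1 j).const_mul _)
    hD (tendsto_sum_range_dyadicBump s hχ1) hf1 hf2 fun n => hsum n ε hε t ht htr f hf2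

end DyadicDecomposition

theorem stmt11_general {a s : ℝ} (ha : a ≠ 0) (ha1 : a ≠ 1) (hs : max a 0 / 4 < s) {χ : ℝ → ℝ}
    (hχ : ContDiff ℝ 2 χ) (hχ0 : ∀ x ∉ Set.Ioo (-2 : ℝ) 2, χ x = 0)
    (hχ1 : ∀ x ∈ Set.Icc (-1 : ℝ) 1, χ x = 1) :
    ∃ C > 0, ∀ t : ℝ → ℝ, Measurable t → (∀ r, |t r| ≤ 1) → ∀ ε : ℝ, |ε| = 1 →
      ∀ f : ℝ → ℂ, IntegrableOn f (Set.Ioi 0) → MemLp f 2 (volume.restrict (Set.Ioi 0)) →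
      eLpNorm (fun r => ∫ ρ in Set.Ioi (0 : ℝ),
          Complex.exp (Complex.I * ((ε * r * ρ + t r * ρ ^ a : ℝ) : ℂ)) *
            ((ρ ^ (-s) : ℝ) : ℂ) * ((1 - χ ρ : ℝ) : ℂ) * f ρ) 2 volume ≤
        ENNReal.ofReal C * eLpNorm f 2 (volume.restrict (Set.Ioi 0)) := by
  obtain ⟨C, hC, hbound⟩ := exists_eLpNorm_oscillatoryTransform_rpow_le ha ha1 hs hχ hχ0 hχ1
  refine ⟨C, hC, fun t ht htr ε hε f hf1 hf2 => ?_⟩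
  have hle := hbound ε hε t ht htr _ (hf1.integrable_indicator measurableSet_Ioi)
    ((memLp_indicator_iff_restrict measurableSet_Ioi).2 hf2)
  rw [eLpNorm_indicator_eq_eLpNorm_restrict measurableSet_Ioi] at hle
  simpa only [← setIntegral_eq_oscillatoryTransform_indicator measurableSet_Ioi,
    Complex.ofReal_mul (_ ^ (-s)), ← mul_assoc] using hle

theorem stmt11 (a : ℝ) (ha : 0 < a) (ha1 : a ≠ 1) (s : ℝ) (hs : a / 4 < s)
    (χ : ℝ → ℝ) (hχsm : ContDiff ℝ (⊤ : ℕ∞) χ) (hχcs : HasCompactSupport χ)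
    (hχeven : ∀ x, χ (-x) = χ x)
    (hχ0 : ∀ x : ℝ, x ∉ Set.Ioo (-2 : ℝ) 2 → χ x = 0)
    (hχ1 : ∀ x ∈ Set.Icc (-1 : ℝ) 1, χ x = 1)
    (hχrange : ∀ x, χ x ∈ Set.Icc (0 : ℝ) 1) :
    ∃ C > 0, ∀ t : ℝ → ℝ, Measurable t → (∀ r, t r ∈ Set.Ioo (-1 : ℝ) 1) →
      ∀ ε : ℝ, (ε = 1 ∨ ε = -1) →
      ∀ f : ℝ → ℂ, ContDiff ℝ (⊤ : ℕ∞) f → HasCompactSupport f → tsupport f ⊆ Set.Ioi 0 →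
      (∫ r in Set.Ioi (0 : ℝ),
          ‖((1 - χ r : ℝ) : ℂ) *
            ∫ ρ in Set.Ioi (0 : ℝ),
              Complex.exp (Complex.I * ((ε * r * ρ + t r * ρ ^ a : ℝ) : ℂ)) *
                ((ρ ^ (-s) : ℝ) : ℂ) * ((1 - χ ρ : ℝ) : ℂ) * f ρ‖ ^ 2)
        ≤ C ^ 2 * ∫ ρ in Set.Ioi (0 : ℝ), ‖f ρ‖ ^ 2 := by
  obtain ⟨C, hC, hbound⟩ := stmt11_general ha.ne' ha1 (by rwa [max_eq_left ha.le])
    (contDiff_infty.1 hχsm 2) hχ0 hχ1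
  refine ⟨C, hC, fun t ht htr ε hε f hf hfc _ => ?_⟩
  have hψ : ∀ r, ‖((1 - χ r : ℝ) : ℂ)‖ ≤ 1 := fun r => by
    rw [Complex.norm_of_nonneg (sub_nonneg.2 (hχrange r).2)]
    exact sub_le_self _ (hχrange r).1
  have hf1 : IntegrableOn f (Set.Ioi 0) :=
    (hf.continuous.integrable_of_hasCompactSupport hfc).integrableOn
  have hf2 : MemLp f 2 (volume.restrict (Set.Ioi 0)) :=
    hf.continuous.memLp_of_hasCompactSupport hfc
  refine integral_norm_sq_le_of_eLpNorm_le hC.le hf2 ?_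
  refine le_trans ?_ (hbound t ht (fun r => (abs_lt.2 (htr r)).le) ε
    ((abs_eq zero_le_one).2 hε) f hf1 hf2)
  refine (eLpNorm_mono_measure _ Measure.restrict_le_self).trans (eLpNorm_mono fun r => ?_)
  exact (norm_mul _ _).trans_le (mul_le_of_le_one_left (norm_nonneg _) (hψ r))
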